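/- Every bridgeless planar graph on n vertices has a cycle double cover of size at most 3⌊(n−1)/2⌋. -/

import Mathlib

/-!
The proof is by reduction to 3-connected graphs and, for these, by improving the double cover by
the facial cycles. In the counts, `n` is the number of nonisolated vertices.

*Reduction.* The bound `2 |S| + 5 ≤ 3 n` is proved by induction on `n`. If the graph has a
separation of order at most one, double covers of the two sides are put together. If the smallest
order of a separation is two, say with separator `{x, y}`, the edge `xy` is added on both sides;
each side stays bridgeless and is a minor of the graph, and cycles through `xy` on the two sides
are merged. A graph without separations of order at most two is a triangle or 3-connected.

*Faces.* Planarity is the absence of `K₅` and `K₃,₃` minors, so faces are replaced by peripheral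
cycles: chordless cycles whose removal leaves the graph connected. As Tutte showed, in a 3-connected
graph they generate all cycles, and every edge lies on such a cycle avoiding a prescribed vertex. An
edge on three of them would give a forbidden minor, so every edge lies on exactly two. Linear
algebra over `𝔽₂` then gives the inequality `m + 2 ≤ f + n` between the numbers of edges, faces and
vertices.

*Saving cycles.* The faces form a double cover of size `f`, which is too large if many faces are
triangles. A triangular face can be deleted if each of the three faces adjacent to it is rerouted
around it, that is, if the common edge is replaced by the other two edges of the triangle. Several
edge-disjoint triangles can be deleted at once provided that the edges they share with each
remaining face pairwise meet. Counting shows that sufficiently many triangles can be deleted to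
leave at most `(3 n - 6) / 2` cycles.
-/

open SimpleGraph

attribute [local instance] Classical.propDecidable

/-- A cycle in a graph: a connected, 2-regular subgraph. -/
def IsCycleSubgraph {V : Type*} {G : SimpleGraph V} (C : G.Subgraph) : Prop :=
  C.coe.Connected ∧ ∀ v ∈ C.verts, (C.neighborSet v).ncard = 2

/-- A cycle double cover: a multiset of cycles covering every edge exactly twice
(counted with multiplicity). -/
def IsCDC {V : Type*} (G : SimpleGraph V) (S : Multiset G.Subgraph) : Prop :=
  (∀ C ∈ S, IsCycleSubgraph C) ∧
  ∀ e ∈ G.edgeSet, S.countP (fun C => e ∈ C.edgeSet) = 2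

/-- Graph minor relation (via branch sets). -/
def HasGraphMinor {V : Type*} {W : Type*} (G : SimpleGraph V) (H : SimpleGraph W) : Prop :=
  ∃ f : W → Set V,
    (∀ w, (f w).Nonempty) ∧
    (∀ w, (G.induce (f w)).Connected) ∧
    (Pairwise fun w₁ w₂ => Disjoint (f w₁) (f w₂)) ∧
    ∀ ⦃w₁ w₂⦄, H.Adj w₁ w₂ → ∃ v₁ ∈ f w₁, ∃ v₂ ∈ f w₂, G.Adj v₁ v₂

/-- Planarity, via Wagner's theorem: no `K₅` minor and no `K_{3,3}` minor. -/
def IsPlanar {V : Type*} (G : SimpleGraph V) : Prop :=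
  ¬ HasGraphMinor G (completeGraph (Fin 5)) ∧
  ¬ HasGraphMinor G (completeBipartiteGraph (Fin 3) (Fin 3))

/-- `k`-connectivity: more than `k` vertices, and removing fewer than `k`
vertices leaves a connected graph. -/
def IsKConnected {V : Type*} [Fintype V] (k : ℕ) (G : SimpleGraph V) : Prop :=
  k < Fintype.card V ∧ ∀ s : Set V, s.ncard < k → (G.induce sᶜ).Connected

/-- A Hamiltonian cycle: a cycle through all vertices. -/
def IsHamCycle {V : Type*} (G : SimpleGraph V) (C : G.Subgraph) : Prop :=
  IsCycleSubgraph C ∧ C.verts = Set.univ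

namespace CycleDoubleCover

/-! ### Connectivity within a set of vertices -/

section Connectivity

variable {V : Type*} {G : SimpleGraph V} {S T : Set V} {a b c : V}

/-- `a` and `b` are joined by a walk of `G` with all its vertices in `S`. In contrast to
reachability in `G.induce S`, the vertices are not elements of a subtype. -/
def ReachableIn (G : SimpleGraph V) (S : Set V) (a b : V) : Prop :=
  ∃ p : G.Walk a b, ∀ z ∈ p.support, z ∈ S

namespace ReachableIn

theorem refl (ha : a ∈ S) : ReachableIn G S a a :=
  ⟨.nil, by simpa using ha⟩

theorem left_mem (h : ReachableIn G S a b) : a ∈ S :=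
  h.elim fun p hp => hp a p.start_mem_support

theorem right_mem (h : ReachableIn G S a b) : b ∈ S :=
  h.elim fun p hp => hp b p.end_mem_support

theorem symm (h : ReachableIn G S a b) : ReachableIn G S b a :=
  h.elim fun p hp => ⟨p.reverse, by simpa using hp⟩

theorem trans (h : ReachableIn G S a b) (h' : ReachableIn G S b c) : ReachableIn G S a c := by
  obtain ⟨p, hp⟩ := h
  obtain ⟨q, hq⟩ := h'
  exact ⟨p.append q, fun z hz => (p.mem_support_append_iff q).1 hz |>.elim (hp z) (hq z)⟩

theorem mono (h : ReachableIn G S a b) (hST : S ⊆ T) : ReachableIn G T a b :=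
  h.elim fun p hp => ⟨p, fun z hz => hST (hp z hz)⟩

end ReachableIn

theorem reachableIn_of_adj (ha : a ∈ S) (hb : b ∈ S) (h : G.Adj a b) : ReachableIn G S a b :=
  ⟨h.toWalk, by simp [ha, hb]⟩

theorem reachableIn_support_left {p : G.Walk a b} {z : V} (hz : z ∈ p.support) :
    ReachableIn G {t | t ∈ p.support} a z := by
  obtain ⟨q, r, rfl⟩ := p.mem_support_iff_exists_append.1 hz
  exact ⟨q, fun t ht => (q.mem_support_append_iff r).2 (.inl ht)⟩

namespace ReachableIn

theorem restrict (h : ReachableIn G S a b) : ReachableIn G {z | ReachableIn G S a z} a b :=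
  h.elim fun p hp => ⟨p, fun _ hz => (reachableIn_support_left hz).mono hp⟩

theorem exists_adj_mem_of_notMem (X : Set V) (h : ReachableIn G S a b) (ha : a ∉ X)
    (hb : b ∈ X) : ∃ a' n, ReachableIn G (S \ X) a a' ∧ G.Adj a' n ∧ n ∈ X ∧ n ∈ S := by
  obtain ⟨p, hp⟩ := h
  have ha' : ReachableIn G (S \ X) a a := refl ⟨hp a p.start_mem_support, ha⟩
  obtain ⟨d, hd, hfst, hsnd⟩ := p.exists_boundary_dart {z | ReachableIn G (S \ X) a z} ha'
    fun h => h.right_mem.2 hb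
  have hS : d.snd ∈ S := hp _ (p.dart_snd_mem_support_of_mem_darts hd)
  refine ⟨d.fst, d.snd, hfst, d.adj, ?_, hS⟩
  by_contra hX
  exact hsnd (hfst.trans (reachableIn_of_adj hfst.right_mem ⟨hS, hX⟩ d.adj))

theorem exists_adj_of_ne (h : ReachableIn G S a b) (hab : a ≠ b) : ∃ t ∈ S, G.Adj a t := by
  obtain ⟨a', n, h₁, h₂, -, h₃⟩ :=
    h.exists_adj_mem_of_notMem {a}ᶜ (by simp) (by simpa using hab.symm)
  obtain rfl : a' = a := by simpa using h₁.right_mem.2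
  exact ⟨n, h₃, h₂⟩

theorem exists_isPath (h : ReachableIn G S a b) :
    ∃ p : G.Walk a b, p.IsPath ∧ ∀ z ∈ p.support, z ∈ S :=
  h.elim fun p hp =>
    ⟨p.bypass, p.bypass_isPath, fun z hz => hp z (p.support_bypass_subset_support hz)⟩

end ReachableIn

theorem connected_induce_iff_reachableIn :
    (G.induce S).Connected ↔ S.Nonempty ∧ ∀ a ∈ S, ∀ b ∈ S, ReachableIn G S a b := by
  constructor
  · intro h
    refine ⟨Set.nonempty_coe_sort.1 h.nonempty, fun a ha b hb => ?_⟩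
    obtain ⟨p⟩ := h.preconnected ⟨a, ha⟩ ⟨b, hb⟩
    refine ⟨p.map (Embedding.induce S).toHom, fun z hz => ?_⟩
    obtain ⟨t, -, rfl⟩ := List.mem_map.1 (Walk.support_map (Embedding.induce S).toHom p ▸ hz)
    exact t.2
  · rintro ⟨hne, h⟩
    have := hne.to_subtype
    exact ⟨fun a b => (h a a.2 b b.2).elim fun p hp => ⟨p.induce S hp⟩⟩

theorem reachableIn_of_connected (h : (G.induce S).Connected) (ha : a ∈ S) (hb : b ∈ S) :
    ReachableIn G S a b :=
  (connected_induce_iff_reachableIn.1 h).2 a ha b hb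

theorem nonempty_of_connected (h : (G.induce S).Connected) : S.Nonempty :=
  (connected_induce_iff_reachableIn.1 h).1

theorem connected_induce_of_forall_reachableIn (ha : a ∈ S) (h : ∀ b ∈ S, ReachableIn G S a b) :
    (G.induce S).Connected :=
  connected_induce_iff_reachableIn.2 ⟨⟨a, ha⟩, fun b hb c hc => (h b hb).symm.trans (h c hc)⟩

theorem connected_induce_singleton (v : V) : (G.induce {v}).Connected :=
  connected_induce_of_forall_reachableIn rfl fun _ hb => hb ▸ .refl rfl

theorem connected_induce_setOf_reachableIn (ha : a ∈ S) :
    (G.induce {z | ReachableIn G S a z}).Connected :=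
  connected_induce_of_forall_reachableIn (.refl ha) fun _ hz => hz.restrict

end Connectivity

section Minors

variable {V : Type*} {G : SimpleGraph V}

theorem pairwise_of_symm_of_lt {n : ℕ} {r : Fin n → Fin n → Prop} (hr : ∀ i j, r i j → r j i)
    (h : ∀ i j, i < j → r i j) : Pairwise r := fun i j hij =>
  (lt_or_gt_of_ne hij).elim (h i j) fun hji => hr j i (h j i hji)

theorem false_of_K33_branchSets (hG : IsPlanar G) (A B : Fin 3 → Set V)
    (hA : ∀ i, (G.induce (A i)).Connected) (hB : ∀ i, (G.induce (B i)).Connected)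
    (hAA : ∀ i j, i < j → Disjoint (A i) (A j)) (hBB : ∀ i j, i < j → Disjoint (B i) (B j))
    (hAB : ∀ i j, Disjoint (A i) (B j))
    (hadj : ∀ i j, ∃ a ∈ A i, ∃ b ∈ B j, G.Adj a b) : False := by
  have hA' := pairwise_of_symm_of_lt (fun _ _ h => h.symm) hAA
  have hB' := pairwise_of_symm_of_lt (fun _ _ h => h.symm) hBB
  refine hG.2 ⟨Sum.elim A B, ?_, ?_, ?_, ?_⟩
  · rintro (i | i)
    exacts [nonempty_of_connected (hA i), nonempty_of_connected (hB i)]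
  · rintro (i | i)
    exacts [hA i, hB i]
  · rintro (i | i) (j | j) hij
    exacts [hA' (by simpa using hij), hAB i j, (hAB j i).symm, hB' (by simpa using hij)]
  · rintro (i | i) (j | j) hij
    · simp at hij
    · exact hadj i j
    · obtain ⟨a, ha, b, hb, h⟩ := hadj j i
      exact ⟨b, hb, a, ha, h.symm⟩
    · simp at hij

theorem false_of_K5_branchSets (hG : IsPlanar G) (A : Fin 5 → Set V)
    (hA : ∀ i, (G.induce (A i)).Connected) (hAA : ∀ i j, i < j → Disjoint (A i) (A j))
    (hadj : ∀ i j, i < j → ∃ a ∈ A i, ∃ b ∈ A j, G.Adj a b) : False := by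
  refine hG.1 ⟨A, fun i => nonempty_of_connected (hA i), hA,
    pairwise_of_symm_of_lt (fun _ _ h => h.symm) hAA, fun i j hij => ?_⟩
  exact pairwise_of_symm_of_lt
    (fun _ _ ⟨a, ha, b, hb, hab⟩ => ⟨b, hb, a, ha, hab.symm⟩) hadj (by simpa using hij)

end Minors

section Paths

variable {V : Type*} {G : SimpleGraph V} {u v w z t : V}

theorem isPath_append_of_forall {p : G.Walk u v} {q : G.Walk v w} (hp : p.IsPath) (hq : q.IsPath)
    (h : ∀ z ∈ p.support, z ∈ q.support → z = v) : (p.append q).IsPath := by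
  have hq' := hq.support_nodup
  rw [← q.cons_tail_support] at hq'
  refine .mk' ?_
  rw [Walk.support_append]
  refine hp.support_nodup.append hq'.of_cons fun z hz hzq => ?_
  exact (List.nodup_cons.1 hq').1 (h z hz (List.mem_of_mem_tail hzq) ▸ hzq)

theorem eq_of_mem_support_of_mem_support {p : G.Walk u v} {q : G.Walk v w}
    (h : (p.append q).IsPath) (hp : z ∈ p.support) (hq : z ∈ q.support) : z = v := by
  by_contra hne
  exact h.ne_of_mem_support_of_append hne hp hq rfl

/-- The vertices of a walk other than its ends. -/
def innerVerts (p : G.Walk u w) : Set V :=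
  {t | t ∈ p.support ∧ t ≠ u ∧ t ≠ w}

theorem innerVerts_reverse (p : G.Walk u w) : innerVerts p.reverse = innerVerts p := by
  ext
  simp [innerVerts, and_comm]

theorem mem_edges_of_innerVerts_eq_empty (p : G.Walk u w) (h : u ≠ w)
    (hp : innerVerts p = ∅) : s(u, w) ∈ p.edges := by
  cases p with
  | nil => exact absurd rfl h
  | @cons _ v _ huv q =>
    have hv : v ∉ innerVerts (Walk.cons huv q) := by simp [hp]
    obtain rfl : v = w := by simpa [innerVerts, huv.ne'] using hv
    simp

theorem exists_mem_innerVerts_of_notMem_edges {p : G.Walk u w} (h : u ≠ w)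
    (hp : s(u, w) ∉ p.edges) : (innerVerts p).Nonempty :=
  Set.nonempty_iff_ne_empty.2 fun h' => hp (mem_edges_of_innerVerts_eq_empty p h h')

theorem connected_induce_innerVerts_and_exists_adj {p : G.Walk u w} (hp : p.IsPath)
    (h : (innerVerts p).Nonempty) :
    (G.induce (innerVerts p)).Connected ∧ ∃ t ∈ innerVerts p, G.Adj u t := by
  cases p with
  | nil => simp [innerVerts] at h
  | @cons _ v _ huv q =>
    obtain ⟨hq, hu⟩ := (Walk.cons_isPath_iff huv q).1 hp
    have hvw : v ≠ w := by
      rintro rfl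
      obtain rfl := (Walk.isPath_iff_nil.1 hq).eq_nil
      obtain ⟨t, ht, htu, htv⟩ := h
      simp [htu, htv] at ht
    have hv : v ∈ innerVerts (Walk.cons huv q) := ⟨by simp, huv.ne', hvw⟩
    refine ⟨connected_induce_of_forall_reachableIn hv ?_, v, hv, huv⟩
    rintro t ⟨ht, htu, htw⟩
    obtain ⟨r, s, rfl⟩ := q.mem_support_iff_exists_append.1
      (List.mem_of_ne_of_mem htu (by simpa using ht))
    refine ⟨r, fun x hx => ⟨by simp [hx], ?_, ?_⟩⟩
    · rintro rfl
      exact hu (by simp [hx])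
    · rintro rfl
      exact htw (eq_of_mem_support_of_mem_support hq hx s.end_mem_support).symm

theorem connected_induce_innerVerts {p : G.Walk u w} (hp : p.IsPath)
    (h : (innerVerts p).Nonempty) : (G.induce (innerVerts p)).Connected :=
  (connected_induce_innerVerts_and_exists_adj hp h).1

theorem exists_mem_innerVerts_adj_left {p : G.Walk u w} (hp : p.IsPath)
    (h : (innerVerts p).Nonempty) : ∃ t ∈ innerVerts p, G.Adj u t :=
  (connected_induce_innerVerts_and_exists_adj hp h).2

theorem exists_mem_innerVerts_adj_right {p : G.Walk u w} (hp : p.IsPath)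
    (h : (innerVerts p).Nonempty) : ∃ t ∈ innerVerts p, G.Adj w t := by
  rw [← innerVerts_reverse] at h ⊢
  exact exists_mem_innerVerts_adj_left hp.reverse h

theorem exists_isPath_between {S Y Z : Set V} {a b : V} (h : ReachableIn G S a b) (ha : a ∈ Y)
    (hb : b ∈ Z) : ∃ y ∈ Y, ∃ z ∈ Z, ∃ p : G.Walk y z, p.IsPath ∧ (∀ t ∈ p.support, t ∈ S) ∧
      ∀ t ∈ innerVerts p, t ∉ Y ∧ t ∉ Z := by
  have hex : ∃ n, ∃ y ∈ Y, ∃ z ∈ Z, ∃ p : G.Walk y z, p.IsPath ∧ (∀ t ∈ p.support, t ∈ S) ∧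
      p.length = n := by
    obtain ⟨p, hp, hpS⟩ := h.exists_isPath
    exact ⟨_, a, ha, b, hb, p, hp, hpS, rfl⟩
  obtain ⟨y, hy, z, hz, p, hp, hpS, hlen⟩ := Nat.find_spec hex
  refine ⟨y, hy, z, hz, p, hp, hpS, ?_⟩
  rintro t ⟨ht, hty, htz⟩
  obtain ⟨q, r, hq, hr, rfl⟩ := hp.mem_support_iff_exists_append.1 ht
  have hq0 : 0 < q.length := Nat.pos_of_ne_zero fun h => hty (Walk.eq_of_length_eq_zero h).symm
  have hr0 : 0 < r.length := Nat.pos_of_ne_zero fun h => htz (Walk.eq_of_length_eq_zero h)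
  rw [Walk.length_append] at hlen
  constructor
  · intro htY
    exact Nat.find_min hex (m := r.length) (by lia)
      ⟨t, htY, z, hz, r, hr, fun s hs => hpS s (by simp [hs]), rfl⟩
  · intro htZ
    exact Nat.find_min hex (m := q.length) (by lia)
      ⟨y, hy, t, htZ, q, hq, fun s hs => hpS s (by simp [hs]), rfl⟩

end Paths

/-! ### Cycles as edge sets -/

section Cycles

variable {V : Type*} {G : SimpleGraph V} {C D : Finset (Sym2 V)} {u v w x y z a b t : V}

/-- The vertices incident with an edge of `C`. -/
noncomputable def verts (C : Finset (Sym2 V)) : Finset V :=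
  C.biUnion Sym2.toFinset

theorem mem_verts : v ∈ verts C ↔ ∃ t, s(v, t) ∈ C := by
  simp only [verts, Finset.mem_biUnion, Sym2.mem_toFinset]
  constructor
  · rintro ⟨e, he, t, rfl⟩
    exact ⟨t, he⟩
  · rintro ⟨t, ht⟩
    exact ⟨_, ht, Sym2.mem_mk_left v t⟩

theorem left_mem_verts (h : s(v, t) ∈ C) : v ∈ verts C :=
  mem_verts.2 ⟨t, h⟩

theorem right_mem_verts (h : s(v, t) ∈ C) : t ∈ verts C :=
  left_mem_verts (Sym2.eq_swap ▸ h)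

theorem verts_union (C D : Finset (Sym2 V)) : verts (C ∪ D) = verts C ∪ verts D :=
  Finset.union_biUnion

theorem mem_verts_edges {p : G.Walk u w} (hp : ¬p.Nil) :
    z ∈ verts p.edges.toFinset ↔ z ∈ p.support := by
  simp [verts, Walk.mem_support_iff_exists_mem_edges_of_not_nil hp]

/-- The edge set `C` is a cycle, split by the distinct vertices `u` and `w` into the arcs
`p` and `q`. -/
structure Arcs (C : Finset (Sym2 V)) (p q : G.Walk u w) : Prop where
  ne : u ≠ w
  left : p.IsPath
  right : q.IsPath
  inter : ∀ z ∈ p.support, z ∈ q.support → z = u ∨ z = w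
  disjoint : p.edges.Disjoint q.edges
  union : C = p.edges.toFinset ∪ q.edges.toFinset

/-- The edge set `C` is a cycle of `G`. -/
def IsCycleEdges (G : SimpleGraph V) (C : Finset (Sym2 V)) : Prop :=
  ∃ u, ∃ c : G.Walk u u, c.IsCycle ∧ c.edges.toFinset = C

theorem mem_edges_of_length_le_one {p : G.Walk u w} (huw : u ≠ w) (hp : p.length ≤ 1) :
    s(u, w) ∈ p.edges := by
  cases p with
  | nil => exact absurd rfl huw
  | cons _ p =>
    obtain rfl := Walk.eq_of_length_eq_zero (p := p) (by simpa using hp)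
    simp

theorem edges_disjoint_of_inter {p q : G.Walk u w}
    (hpq : ∀ z ∈ p.support, z ∈ q.support → z = u ∨ z = w) (huw : s(u, w) ∉ p.edges) :
    p.edges.Disjoint q.edges := by
  rintro ⟨a, b⟩ hp hq
  have ha := hpq a (p.fst_mem_support_of_mem_edges hp) (q.fst_mem_support_of_mem_edges hq)
  have hb := hpq b (p.snd_mem_support_of_mem_edges hp) (q.snd_mem_support_of_mem_edges hq)
  have hab := (p.adj_of_mem_edges hp).ne
  have : s(a, b) = s(u, w) := by
    rw [Sym2.eq_iff]
    grind
  exact huw (this ▸ hp)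

namespace Arcs

variable {p q : G.Walk u w}

theorem mem_iff (h : Arcs C p q) {e : Sym2 V} : e ∈ C ↔ e ∈ p.edges ∨ e ∈ q.edges := by
  simp [h.union]

theorem mem_verts (h : Arcs C p q) : z ∈ verts C ↔ z ∈ p.support ∨ z ∈ q.support := by
  rw [h.union, verts_union, Finset.mem_union, mem_verts_edges (Walk.not_nil_of_ne h.ne),
    mem_verts_edges (Walk.not_nil_of_ne h.ne)]

theorem swap (h : Arcs C p q) : Arcs C q p :=
  ⟨h.ne, h.right, h.left, fun z hp hq => h.inter z hq hp, h.disjoint.symm,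
    h.union.trans (Finset.union_comm _ _)⟩

theorem symm (h : Arcs C p q) : Arcs C p.reverse q.reverse where
  ne := h.ne.symm
  left := h.left.reverse
  right := h.right.reverse
  inter z hp hq := (h.inter z (by simpa using hp) (by simpa using hq)).symm
  disjoint := by simpa using h.disjoint
  union := by simpa using h.union

theorem one_lt_length (h : Arcs C p q) : 1 < p.length ∨ 1 < q.length := by
  by_contra! hlt
  exact h.disjoint (mem_edges_of_length_le_one h.ne hlt.1) (mem_edges_of_length_le_one h.ne hlt.2)

theorem isCycleEdges (h : Arcs C p q) : IsCycleEdges G C := by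
  refine ⟨u, p.append q.reverse, h.left.isCycle_append h.right.reverse ?_ ?_, ?_⟩
  · intro z hp hq
    have hu := h.left.support_nodup
    have hw := h.right.reverse.support_nodup
    rw [← Walk.cons_tail_support, List.nodup_cons] at hu hw
    rcases h.inter z (List.mem_of_mem_tail hp) (by simpa using List.mem_of_mem_tail hq) with
      rfl | rfl
    exacts [hu.1 hp, hw.1 hq]
  · simpa using h.one_lt_length
  · ext
    simp [h.union]

theorem append_left {p₁ : G.Walk u v} {p₂ : G.Walk v w} (h : Arcs C (p₁.append p₂) q)
    (hv : v ≠ u) : Arcs C p₁ (q.append p₂.reverse) := by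
  have hu : u ∉ p₂.support := fun hu =>
    hv (eq_of_mem_support_of_mem_support h.left p₁.start_mem_support hu).symm
  have hw := p₂.end_mem_support
  have hinter := h.inter
  have hp := fun z => eq_of_mem_support_of_mem_support (z := z) h.left
  have hE := List.nodup_append.1 (Walk.edges_append p₁ p₂ ▸ h.left.isTrail.edges_nodup)
  have hdisj := h.disjoint
  simp only [Walk.mem_support_append_iff, Walk.edges_append, List.disjoint_append_left]
    at hinter hdisj
  refine ⟨hv.symm, h.left.of_append_left, isPath_append_of_forall h.right
    h.left.of_append_right.reverse ?_, ?_, ?_, ?_⟩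
  · simp only [Walk.support_reverse, List.mem_reverse]
    grind
  · simp only [Walk.mem_support_append_iff, Walk.support_reverse, List.mem_reverse]
    grind
  · simp only [Walk.edges_append, Walk.edges_reverse, List.disjoint_append_right,
      List.disjoint_reverse_right]
    exact ⟨hdisj.1, fun e h₁ h₂ => hE.2.2 e h₁ e h₂ rfl⟩
  · rw [h.union]
    ext
    simp only [Walk.edges_append, Walk.edges_reverse, Finset.mem_union, List.mem_toFinset,
      List.mem_append, List.mem_reverse]
    tauto

theorem append_right {p₁ : G.Walk u v} {p₂ : G.Walk v w} (h : Arcs C (p₁.append p₂) q)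
    (hv : v ≠ w) : Arcs C p₂ (p₁.reverse.append q) := by
  have h' := h.symm
  rw [Walk.reverse_append] at h'
  simpa using (h'.append_left hv).symm

theorem exists_cross (h : Arcs C p q) (ha : a ∈ innerVerts p) (ht : t ∈ innerVerts q) :
    ∃ p' q' : G.Walk a t, Arcs C p' q' ∧ u ∈ p'.support ∧ w ∈ q'.support := by
  have hta : t ≠ a := by
    rintro rfl
    exact (h.inter t ha.1 ht.1).elim ha.2.1 ha.2.2
  obtain ⟨p₁, p₂, rfl⟩ := Walk.mem_support_iff_exists_append.1 ha.1
  obtain ⟨q₁, q₂, rfl⟩ := Walk.mem_support_iff_exists_append.1 ht.1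
  have h' := (h.append_left ha.2.1).swap
  rw [← Walk.append_assoc] at h'
  exact ⟨_, _, (h'.append_right hta).symm.swap, by simp, by simp⟩

theorem exists_minimal (h : Arcs C p q) {N : Set V} (hu : u ∈ N) (hw : w ∈ N)
    (hx : x ∈ p.support) : ∃ k ∈ N, ∃ k' ∈ N, ∃ p' q' : G.Walk k k', Arcs C p' q' ∧
      x ∈ p'.support ∧ ∀ z ∈ innerVerts p', z ∉ N := by
  induction hm : p.length using Nat.strong_induction_on generalizing u w with
  | _ m ih =>
    by_cases hN : ∀ z ∈ innerVerts p, z ∉ N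
    · exact ⟨u, hu, w, hw, p, q, h, hx, hN⟩
    push Not at hN
    obtain ⟨z, ⟨hz, hzu, hzw⟩, hzN⟩ := hN
    obtain ⟨p₁, p₂, rfl⟩ := Walk.mem_support_iff_exists_append.1 hz
    have hlen := Walk.length_append p₁ p₂
    rcases (p₁.mem_support_append_iff p₂).1 hx with hx | hx
    · have := Walk.not_nil_iff_lt_length.1 (Walk.not_nil_of_ne hzw (p := p₂))
      exact ih p₁.length (by lia) (h.append_left hzu) hu hzN hx rfl
    · have := Walk.not_nil_iff_lt_length.1 (Walk.not_nil_of_ne hzu.symm (p := p₁))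
      exact ih p₂.length (by lia) (h.append_right hzw) hzN hw hx rfl

end Arcs

theorem arcs_of_isCycle_append {p : G.Walk u w} {q : G.Walk w u} (h : (p.append q).IsCycle)
    (huw : u ≠ w) : Arcs (p.append q).edges.toFinset p q.reverse where
  ne := huw
  left := h.isPath_of_append_left (Walk.not_nil_of_ne huw.symm)
  right := (h.isPath_of_append_right (Walk.not_nil_of_ne huw)).reverse
  inter z hp hq := by
    rw [Walk.support_reverse, List.mem_reverse, Walk.mem_support_iff] at hq
    rw [Walk.mem_support_iff] at hp
    have hnodup := h.support_nodup
    rw [Walk.tail_support_append, List.nodup_append] at hnodup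
    grind
  disjoint := by
    have hnodup := h.isCircuit.isTrail.edges_nodup
    rw [Walk.edges_append, List.nodup_append'] at hnodup
    simpa using hnodup.2.2
  union := by simp

theorem edges_subset_iff_eq {p q : G.Walk u w} (hp : p.IsPath) (hq : q.IsPath) :
    p.edges ⊆ q.edges ↔ p = q := by
  refine ⟨fun h => ?_, fun h => h ▸ List.Subset.refl _⟩
  induction p with
  | nil => exact (Walk.isPath_iff_nil.1 hq).eq_nil.symm
  | @cons u v w huv p ih =>
    obtain ⟨hp', hu⟩ := (Walk.cons_isPath_iff huv p).1 hp
    have hmem : s(u, v) ∈ q.edges := h (by simp)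
    cases q with
    | nil => simp at hmem
    | @cons _ v' _ huv' q =>
      obtain rfl : v = v' := by simpa using hq.eq_snd_of_mem_edges hmem
      refine congrArg (Walk.cons huv) (ih hp' hq.of_cons fun e he => ?_)
      refine List.mem_of_ne_of_mem ?_ (h (List.mem_cons_of_mem _ he))
      rintro rfl
      exact hu (p.fst_mem_support_of_mem_edges he)

namespace IsCycleEdges

theorem mem_edgeSet (h : IsCycleEdges G C) {e : Sym2 V} (he : e ∈ C) : e ∈ G.edgeSet := by
  obtain ⟨u, c, -, rfl⟩ := h
  exact c.edges_subset_edgeSet (List.mem_toFinset.1 he)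

theorem adj (h : IsCycleEdges G C) (he : s(a, b) ∈ C) : G.Adj a b :=
  h.mem_edgeSet he

theorem transfer {H : SimpleGraph V} (h : IsCycleEdges G C) (hC : ∀ e ∈ C, e ∈ H.edgeSet) :
    IsCycleEdges H C := by
  obtain ⟨u, c, hc, rfl⟩ := h
  have hH : ∀ e ∈ c.edges, e ∈ H.edgeSet := fun e he => hC e (List.mem_toFinset.2 he)
  exact ⟨u, c.transfer H hH, hc.transfer hH, by simp⟩

theorem exists_isCycle_of_mem_verts (h : IsCycleEdges G C) (hu : u ∈ verts C) :
    ∃ c : G.Walk u u, c.IsCycle ∧ c.edges.toFinset = C := by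
  obtain ⟨v, c, hc, rfl⟩ := h
  rw [mem_verts_edges hc.not_nil] at hu
  exact ⟨c.rotate u hu, hc.rotate hu, List.toFinset_eq_of_perm _ _ (c.rotate_edges u hu).perm⟩

theorem exists_arcs (h : IsCycleEdges G C) (hu : u ∈ verts C) (hw : w ∈ verts C) (huw : u ≠ w) :
    ∃ p q : G.Walk u w, Arcs C p q := by
  obtain ⟨c, hc, rfl⟩ := h.exists_isCycle_of_mem_verts hu
  rw [mem_verts_edges hc.not_nil] at hw
  obtain ⟨p, q, rfl⟩ := Walk.mem_support_iff_exists_append.1 hw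
  exact ⟨p, q.reverse, arcs_of_isCycle_append hc huw⟩

theorem exists_forall_mem_iff (h : IsCycleEdges G C) (hx : x ∈ verts C) :
    ∃ y z, y ≠ z ∧ ∀ t, s(x, t) ∈ C ↔ t = y ∨ t = z := by
  obtain ⟨c, hc, rfl⟩ := h.exists_isCycle_of_mem_verts hx
  obtain ⟨y, z, hyz, hN⟩ :=
    Set.ncard_eq_two.1 (hc.ncard_neighborSet_toSubgraph_eq_two c.start_mem_support)
  refine ⟨y, z, hyz, fun t => ?_⟩
  rw [List.mem_toFinset, ← Walk.adj_toSubgraph_iff_mem_edges, ← Subgraph.mem_neighborSet, hN,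
    Set.mem_insert_iff, Set.mem_singleton_iff]

theorem exists_isPath_of_mem (h : IsCycleEdges G C) (he : s(a, b) ∈ C) :
    ∃ q : G.Walk a b, q.IsPath ∧ s(a, b) ∉ q.edges ∧ C = insert s(a, b) q.edges.toFinset ∧
      verts C = q.support.toFinset := by
  have key {p q : G.Walk a b} (h : Arcs C p q) (hab : s(a, b) ∈ p.edges) :
      ∃ q : G.Walk a b, q.IsPath ∧ s(a, b) ∉ q.edges ∧ C = insert s(a, b) q.edges.toFinset ∧
        verts C = q.support.toFinset := by
    obtain ⟨hadj, rfl⟩ : ∃ hadj : G.Adj a b, p = hadj.toWalk :=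
      ⟨_, h.left.eq_adj_toWalk_of_mem_edges hab⟩
    refine ⟨q, h.right, h.disjoint hab, by simpa using h.union, Finset.ext fun z => ?_⟩
    rw [h.mem_verts, List.mem_toFinset, or_iff_right_of_imp]
    simp only [Adj.toWalk, Walk.support_cons, Walk.support_nil, List.mem_cons,
      List.not_mem_nil, or_false]
    rintro (rfl | rfl) <;> simp
  obtain ⟨p, q, hpq⟩ :=
    h.exists_arcs (left_mem_verts he) (right_mem_verts he) (h.adj he).ne
  exact (hpq.mem_iff.1 he).elim (key hpq) (key hpq.swap)

theorem of_isPath {p : G.Walk b a} (hab : G.Adj a b) (hp : p.IsPath) (h : s(a, b) ∉ p.edges) :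
    IsCycleEdges G (insert s(a, b) p.edges.toFinset) :=
  ⟨a, .cons hab p, (Walk.cons_isCycle_iff p hab).2 ⟨hp, h⟩, by simp⟩

theorem exists_mem (h : IsCycleEdges G C) : ∃ a b, s(a, b) ∈ C := by
  obtain ⟨u, c, hc, rfl⟩ := h
  cases c with
  | nil => exact absurd .nil hc.not_nil
  | @cons u v w huv p => exact ⟨u, v, by simp⟩

theorem card_eq (h : IsCycleEdges G C) : C.card = (verts C).card := by
  obtain ⟨a, b, hab⟩ := h.exists_mem
  obtain ⟨q, hq, hnotMem, hC, hverts⟩ := h.exists_isPath_of_mem hab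
  rw [hverts, List.toFinset_card_of_nodup hq.support_nodup, hC,
    Finset.card_insert_of_notMem (by simpa using hnotMem),
    List.toFinset_card_of_nodup hq.isTrail.edges_nodup]
  simp

theorem exists_third (h : IsCycleEdges G C) (he : s(a, b) ∈ C) :
    ∃ c ∈ verts C, c ≠ a ∧ c ≠ b := by
  obtain ⟨q, -, hnotMem, -, hverts⟩ := h.exists_isPath_of_mem he
  obtain ⟨c, hc, hca, hcb⟩ := exists_mem_innerVerts_of_notMem_edges (h.adj he).ne hnotMem
  exact ⟨c, by simpa [hverts] using hc, hca, hcb⟩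

theorem eq_of_subset (hC : IsCycleEdges G C) (hD : IsCycleEdges G D) (h : C ⊆ D) : C = D := by
  obtain ⟨a, b, hab⟩ := hC.exists_mem
  obtain ⟨p, hp, hpab, rfl, -⟩ := hC.exists_isPath_of_mem hab
  obtain ⟨q, hq, -, rfl, -⟩ := hD.exists_isPath_of_mem (h hab)
  rw [(edges_subset_iff_eq hp hq).1 fun e he => ?_]
  have : e ≠ s(a, b) := by
    rintro rfl
    exact hpab he
  simpa [this] using h (Finset.mem_insert_of_mem (List.mem_toFinset.2 he))

theorem detour (hC : IsCycleEdges G C) (he : s(a, b) ∈ C) (hx : x ∉ verts C)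
    (hax : G.Adj a x) (hxb : G.Adj x b) :
    IsCycleEdges G (insert s(a, x) (insert s(x, b) (C.erase s(a, b)))) := by
  obtain ⟨q, hq, hnotMem, hCq, hverts⟩ := hC.exists_isPath_of_mem he
  have hxq : x ∉ q.support := by simpa [hverts] using hx
  have hpath : (Walk.cons hxb q.reverse).IsPath :=
    hq.reverse.cons (by simpa using hxq)
  rw [hCq, Finset.erase_insert (by simpa using hnotMem)]
  have hax' : s(a, x) ∉ (Walk.cons hxb q.reverse).edges := by
    have hqe : s(a, x) ∉ q.edges := fun h => hxq (q.snd_mem_support_of_mem_edges h)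
    simp [hqe, hax.ne, (hC.adj he).ne]
  simpa using of_isPath hax hpath hax'

theorem merge (hC : IsCycleEdges G C) (hD : IsCycleEdges G D) (hxyC : s(x, y) ∈ C)
    (hxyD : s(x, y) ∈ D) (h : ∀ z ∈ verts C, z ∈ verts D → z = x ∨ z = y) :
    IsCycleEdges G (C.erase s(x, y) ∪ D.erase s(x, y)) := by
  obtain ⟨p, hp, hxyp, hCp, hCverts⟩ := hC.exists_isPath_of_mem hxyC
  obtain ⟨q, hq, hxyq, hDq, hDverts⟩ := hD.exists_isPath_of_mem hxyD
  simp only [hCverts, hDverts, List.mem_toFinset] at h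
  rw [hCp, hDq, Finset.erase_insert (by simpa using hxyp),
    Finset.erase_insert (by simpa using hxyq)]
  exact Arcs.isCycleEdges ⟨(hC.adj hxyC).ne, hp, hq, h, edges_disjoint_of_inter h hxyp, rfl⟩

end IsCycleEdges

end Cycles

/-! ### Peripheral cycles -/

section ThreeConnected

variable {V : Type*} {G : SimpleGraph V} {C : Finset (Sym2 V)} {v x y z : V}

theorem IsCycleEdges.mem_support (h : IsCycleEdges G C) (hv : v ∈ verts C) : v ∈ G.support := by
  obtain ⟨t, ht⟩ := mem_verts.1 hv
  exact ⟨t, h.adj ht⟩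

theorem IsCycleEdges.exists_mem_verts_ne_ne (h : IsCycleEdges G C) (y z : V) :
    ∃ c ∈ verts C, c ≠ y ∧ c ≠ z := by
  obtain ⟨a, b, hab⟩ := h.exists_mem
  have hne := (h.adj hab).ne
  have ha := left_mem_verts hab
  have hb := right_mem_verts hab
  obtain ⟨c, hc, hca, hcb⟩ := h.exists_third hab
  grind

/-- 3-connectivity of the graph obtained from `G` by deleting its isolated vertices. -/
structure ThreeConnected (G : SimpleGraph V) : Prop where
  four_le_ncard : 4 ≤ G.support.ncard
  reachableIn : ∀ x y, ∀ a ∈ G.support, ∀ b ∈ G.support, a ≠ x → a ≠ y → b ≠ x → b ≠ y →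
    ReachableIn G {z | z ≠ x ∧ z ≠ y} a b

namespace ThreeConnected

theorem exists_mem_support_ne (h : ThreeConnected G) (x y z : V) :
    ∃ t ∈ G.support, t ≠ x ∧ t ≠ y ∧ t ≠ z := by
  by_contra! hcon
  have hsub : G.support ⊆ ({x, y, z} : Finset V) := by
    intro t ht
    have := hcon t ht
    simp only [Finset.coe_insert, Finset.coe_singleton, Set.mem_insert_iff,
      Set.mem_singleton_iff]
    tauto
  have hle := Set.ncard_le_ncard hsub
  rw [Set.ncard_coe_finset] at hle
  have := Finset.card_le_three (a := x) (b := y) (c := z)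
  have := h.four_le_ncard
  lia

theorem exists_adj_ne_ne (h : ThreeConnected G) (hv : v ∈ G.support) (hy : v ≠ y) (hz : v ≠ z) :
    ∃ t, G.Adj v t ∧ t ≠ y ∧ t ≠ z := by
  obtain ⟨b, hb, hbv, hby, hbz⟩ := h.exists_mem_support_ne v y z
  obtain ⟨t, ⟨hty, htz⟩, hvt⟩ :=
    (h.reachableIn y z v hv b hb hy hz hby hbz).exists_adj_of_ne hbv.symm
  exact ⟨t, hvt, hty, htz⟩

end ThreeConnected

end ThreeConnected

section Components

variable {V : Type*} {G : SimpleGraph V} {C D : Finset (Sym2 V)} {k₀ k l n t x y z : V}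

/-- The component containing `k₀` of the graph obtained from `G` by deleting the vertices of the
cycle `C`. -/
def outerComponent (G : SimpleGraph V) (C : Finset (Sym2 V)) (k₀ : V) : Set V :=
  {z | ReachableIn G {z | z ∉ verts C} k₀ z}

/-- The vertices of the cycle `C` which have a neighbour in the component of `k₀` outside `C`. -/
def attachments (G : SimpleGraph V) (C : Finset (Sym2 V)) (k₀ : V) : Set V :=
  {n | n ∈ verts C ∧ ∃ k ∈ outerComponent G C k₀, G.Adj k n}

theorem notMem_verts_of_mem_outerComponent (h : k ∈ outerComponent G C k₀) : k ∉ verts C :=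
  ReachableIn.right_mem h

theorem mem_outerComponent_of_adj (h : k ∈ outerComponent G C k₀) (hkt : G.Adj k t)
    (ht : t ∉ verts C) : t ∈ outerComponent G C k₀ :=
  ReachableIn.trans h (reachableIn_of_adj (notMem_verts_of_mem_outerComponent h) ht hkt)

theorem exists_mem_attachments (h : ReachableIn G {t | t ≠ y ∧ t ≠ z} l x)
    (hl : l ∈ outerComponent G C k₀) (hx : x ∈ verts C) :
    ∃ n ∈ attachments G C k₀, n ≠ y ∧ n ≠ z := by
  obtain ⟨k, n, hlk, hkn, hnC, hn⟩ := h.exists_adj_mem_of_notMem (verts C)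
    (notMem_verts_of_mem_outerComponent hl) hx
  exact ⟨n, ⟨hnC, k, ReachableIn.trans hl (hlk.mono fun t ht => ht.2), hkn⟩, hn⟩

theorem exists_mem_attachments_ne_ne (hT : ThreeConnected G) (hC : IsCycleEdges G C)
    (hk : k₀ ∈ G.support) (hkC : k₀ ∉ verts C) (hy : y ∈ verts C) (hz : z ∈ verts C) :
    ∃ n ∈ attachments G C k₀, n ≠ y ∧ n ≠ z := by
  obtain ⟨x, hx, hxy, hxz⟩ := hC.exists_mem_verts_ne_ne y z
  exact exists_mem_attachments
    (hT.reachableIn y z k₀ hk x (hC.mem_support hx) (fun h => hkC (h ▸ hy))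
      (fun h => hkC (h ▸ hz)) hxy hxz) (.refl hkC) hx

theorem outerComponent_mono (h : ∀ k ∈ outerComponent G C k₀, k ∉ verts D) :
    outerComponent G C k₀ ⊆ outerComponent G D k₀ :=
  fun _ hz => hz.restrict.mono h

theorem outerComponent_ssubset (h : ∀ k ∈ outerComponent G C k₀, k ∉ verts D)
    (hn : n ∈ attachments G C k₀) (hnD : n ∉ verts D) :
    outerComponent G C k₀ ⊂ outerComponent G D k₀ := by
  refine ⟨outerComponent_mono h, fun hs => ?_⟩
  obtain ⟨hnC, k, hk, hkn⟩ := hn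
  exact notMem_verts_of_mem_outerComponent
    (hs (mem_outerComponent_of_adj (outerComponent_mono h hk) hkn hnD)) hnC

end Components

section Ears

variable {V : Type*} {G : SimpleGraph V} {C : Finset (Sym2 V)} {k₀ b u w n z : V}
  {p q j : G.Walk u w}

theorem notMem_edges_of_mem_innerVerts (hp : p.IsPath) (hz : z ∈ innerVerts p) :
    s(u, w) ∉ p.edges := by
  intro h
  obtain ⟨hadj, rfl⟩ : ∃ hadj : G.Adj u w, p = hadj.toWalk := ⟨_, hp.eq_adj_toWalk_of_mem_edges h⟩
  obtain ⟨hz, hzu, hzw⟩ := hz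
  simp [hzu, hzw] at hz

theorem Arcs.notMem_of_mem_innerVerts {x y : V} (h : Arcs C p q) (hx : x ∈ innerVerts p)
    (hy : y ∈ innerVerts q) : s(u, w) ∉ C := fun he =>
  (h.mem_iff.1 he).elim (notMem_edges_of_mem_innerVerts h.left hx)
    (notMem_edges_of_mem_innerVerts h.right hy)

theorem Arcs.exists_mem_innerVerts_left (h : Arcs C p q) (huw : s(u, w) ∉ C) :
    (innerVerts p).Nonempty :=
  exists_mem_innerVerts_of_notMem_edges h.ne fun he => huw (h.mem_iff.2 (.inl he))

/-- The path `j` is an ear of `C`: it is disjoint from `C` apart from its ends, and it is not an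
edge of `C`. -/
structure IsEar (C : Finset (Sym2 V)) (j : G.Walk u w) : Prop where
  isPath : j.IsPath
  notMem_verts : ∀ z ∈ innerVerts j, z ∉ verts C
  notMem : ∀ e ∈ j.edges, e ∉ C

theorem isEar_of_isPath (hj : j.IsPath) (hjC : ∀ z ∈ innerVerts j, z ∉ verts C)
    (huw : s(u, w) ∈ j.edges → s(u, w) ∉ C) : IsEar C j := by
  refine ⟨hj, hjC, ?_⟩
  rintro ⟨a, b⟩ he heC
  have ha : a = u ∨ a = w := by
    by_contra! ha
    exact hjC a ⟨j.fst_mem_support_of_mem_edges he, ha⟩ (left_mem_verts heC)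
  have hb : b = u ∨ b = w := by
    by_contra! hb
    exact hjC b ⟨j.snd_mem_support_of_mem_edges he, hb⟩ (right_mem_verts heC)
  have hab : s(a, b) = s(u, w) := by
    have := (j.adj_of_mem_edges he).ne
    rw [Sym2.eq_iff]
    grind
  change s(a, b) ∈ j.edges at he
  change s(a, b) ∈ C at heC
  rw [hab] at he heC
  exact huw he heC

theorem isEar_toWalk (h : G.Adj u w) (huw : s(u, w) ∉ C) : IsEar C h.toWalk :=
  isEar_of_isPath (by simp [h.ne])
    (fun z hz => absurd (by simp) (notMem_edges_of_mem_innerVerts (by simp [h.ne]) hz))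
    fun _ => huw

namespace IsEar

theorem eq_or_eq (hj : IsEar C j) (hz : z ∈ j.support) (hzC : z ∈ verts C) : z = u ∨ z = w := by
  by_contra! h
  exact hj.notMem_verts z ⟨hz, h⟩ hzC

theorem arcs (hj : IsEar C j) (h : Arcs C p q) :
    Arcs (p.edges.toFinset ∪ j.edges.toFinset) p j :=
  ⟨h.ne, h.left, hj.isPath, fun _ hp hzj => hj.eq_or_eq hzj (h.mem_verts.2 (.inl hp)),
    fun e hp he => hj.notMem e he (h.mem_iff.2 (.inl hp)), rfl⟩

theorem notMem_verts_union (hj : IsEar C j) (h : Arcs C p q) (hn : n ∈ innerVerts q) :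
    n ∉ verts (p.edges.toFinset ∪ j.edges.toFinset) := by
  rw [(hj.arcs h).mem_verts, not_or]
  exact ⟨fun hp => (h.inter n hp hn.1).elim hn.2.1 hn.2.2,
    fun hnj => (hj.eq_or_eq hnj (h.mem_verts.2 (.inr hn.1))).elim hn.2.1 hn.2.2⟩

theorem notMem_verts_union_of_mem_outerComponent (hj : IsEar C j) (h : Arcs C p q)
    (hjK : ∀ z ∈ innerVerts j, z ∉ outerComponent G C k₀) {k : V}
    (hk : k ∈ outerComponent G C k₀) : k ∉ verts (p.edges.toFinset ∪ j.edges.toFinset) := by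
  have hkC := notMem_verts_of_mem_outerComponent hk
  have hu : u ∈ verts C := h.mem_verts.2 (.inl p.start_mem_support)
  have hw : w ∈ verts C := h.mem_verts.2 (.inl p.end_mem_support)
  rw [(hj.arcs h).mem_verts, not_or]
  refine ⟨fun hkp => hkC (h.mem_verts.2 (.inl hkp)), fun hkj => hjK k ⟨hkj, ?_, ?_⟩ hk⟩
  · exact fun hku => hkC (hku ▸ hu)
  · exact fun hkw => hkC (hkw ▸ hw)

end IsEar

theorem exists_isEar_outerComponent (hT : ThreeConnected G) (hC : IsCycleEdges G C)
    (hb : b ∈ G.support) (hbC : b ∉ verts C) :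
    ∃ u ∈ verts C, ∃ w ∈ verts C, u ≠ w ∧ ∃ j : G.Walk u w, IsEar C j ∧
      (innerVerts j).Nonempty ∧ innerVerts j ⊆ outerComponent G C b := by
  obtain ⟨c, hc, -⟩ := hC.exists_mem_verts_ne_ne b b
  obtain ⟨u, ⟨huC, l, hl, hlu⟩, -⟩ := exists_mem_attachments_ne_ne hT hC hb hbC hc hc
  obtain ⟨w, ⟨hwC, l', hl', hlw⟩, hwu, -⟩ := exists_mem_attachments_ne_ne hT hC hb hbC huC huC
  obtain ⟨p, hp, hpK⟩ := (hl.restrict.symm.trans hl'.restrict).exists_isPath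
  have hpC : ∀ z ∈ p.support, z ∉ verts C := fun z hz =>
    notMem_verts_of_mem_outerComponent (hpK z hz)
  have hj : (Walk.cons hlu.symm (p.concat hlw)).IsPath := by
    refine (hp.concat (fun h => hpC w h hwC) hlw).cons ?_
    simpa [Walk.support_concat, hwu.symm] using fun h => hpC u h huC
  have hinner : ∀ z ∈ innerVerts (Walk.cons hlu.symm (p.concat hlw)), z ∈ p.support := by
    rintro z ⟨hz, hzu, hzw⟩
    simpa [Walk.support_concat, hzu, hzw] using hz
  have hlmem : l ∈ innerVerts (Walk.cons hlu.symm (p.concat hlw)) :=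
    ⟨by simp [Walk.support_concat], hlu.ne, fun h => hpC l p.start_mem_support (h ▸ hwC)⟩
  exact ⟨u, huC, w, hwC, hwu.symm, _, isEar_of_isPath hj (fun z hz => hpC z (hinner z hz))
    fun he => absurd he (notMem_edges_of_mem_innerVerts hj hlmem),
    ⟨l, hlmem⟩, fun z hz => hpK z (hinner z hz)⟩

end Ears

section Generation

variable {V : Type*} {G : SimpleGraph V} {C : Finset (Sym2 V)} {S : Set (Finset (Sym2 V))}
  {k₀ : V}

/-- A chordless cycle, given by its edge set. -/
structure IsInducedCycle (G : SimpleGraph V) (C : Finset (Sym2 V)) : Prop where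
  isCycleEdges : IsCycleEdges G C
  induced : ∀ u ∈ verts C, ∀ w ∈ verts C, G.Adj u w → s(u, w) ∈ C

/-- A peripheral cycle: an induced cycle whose removal leaves the graph connected, apart from
isolated vertices. -/
structure IsPeripheral (G : SimpleGraph V) (C : Finset (Sym2 V)) : Prop
    extends IsInducedCycle G C where
  reachableIn : ∀ a ∈ G.support, ∀ b ∈ G.support, a ∉ verts C → b ∉ verts C →
    ReachableIn G {z | z ∉ verts C} a b

/-- The finite sets which are sums of members of `S`, addition being symmetric difference. -/
inductive SymmDiffClosure {α : Type*} [DecidableEq α] (S : Set (Finset α)) : Finset α → Prop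
  | of_mem {A : Finset α} : A ∈ S → SymmDiffClosure S A
  | symmDiff {A B : Finset α} : SymmDiffClosure S A → SymmDiffClosure S B →
      SymmDiffClosure S (symmDiff A B)

theorem SymmDiffClosure.mono {α : Type*} [DecidableEq α] {S T : Set (Finset α)} {A : Finset α}
    (hST : S ⊆ T) (h : SymmDiffClosure S A) : SymmDiffClosure T A := by
  induction h with
  | of_mem h => exact .of_mem (hST h)
  | symmDiff _ _ hA hB => exact .symmDiff hA hB

theorem IsEar.symmDiffClosure {u w : V} {p q j : G.Walk u w} (hj : IsEar C j) (h : Arcs C p q)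
    (hp : SymmDiffClosure S (p.edges.toFinset ∪ j.edges.toFinset))
    (hq : SymmDiffClosure S (q.edges.toFinset ∪ j.edges.toFinset)) : SymmDiffClosure S C := by
  convert hp.symmDiff hq using 1
  ext e
  have hjC := hj.notMem e
  have hdisj := @h.disjoint e
  rw [h.mem_iff] at hjC ⊢
  simp only [Finset.mem_symmDiff, Finset.mem_union, List.mem_toFinset]
  tauto

/-- The members of `S` generate every cycle avoiding `k₀` for which the component of `k₀` is
larger than it is for `C`. -/
def GeneratesLarger (G : SimpleGraph V) (S : Set (Finset (Sym2 V))) (C : Finset (Sym2 V))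
    (k₀ : V) : Prop :=
  ∀ D, IsCycleEdges G D → k₀ ∉ verts D → outerComponent G C k₀ ⊂ outerComponent G D k₀ →
    SymmDiffClosure S D

namespace GeneratesLarger

theorem of_isEar_left {u w n : V} {p q j : G.Walk u w} (hS : GeneratesLarger G S C k₀)
    (hkC : k₀ ∉ verts C) (h : Arcs C p q) (hj : IsEar C j)
    (hjK : ∀ z ∈ innerVerts j, z ∉ outerComponent G C k₀) (hn : n ∈ innerVerts q)
    (hnA : n ∈ attachments G C k₀) :
    SymmDiffClosure S (p.edges.toFinset ∪ j.edges.toFinset) := by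
  have hK := fun k hk => hj.notMem_verts_union_of_mem_outerComponent h hjK (k := k) hk
  exact hS _ (hj.arcs h).isCycleEdges (hK k₀ (.refl hkC))
    (outerComponent_ssubset hK hnA (hj.notMem_verts_union h hn))

theorem of_isEar {u w n n' : V} {p q j : G.Walk u w} (hS : GeneratesLarger G S C k₀)
    (hkC : k₀ ∉ verts C) (h : Arcs C p q) (hj : IsEar C j)
    (hjK : ∀ z ∈ innerVerts j, z ∉ outerComponent G C k₀)
    (hn : n ∈ innerVerts p) (hnA : n ∈ attachments G C k₀)
    (hn' : n' ∈ innerVerts q) (hnA' : n' ∈ attachments G C k₀) : SymmDiffClosure S C :=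
  hj.symmDiffClosure h (hS.of_isEar_left hkC h hj hjK hn' hnA')
    (hS.of_isEar_left hkC h.swap hj hjK hn hnA)

end GeneratesLarger

theorem exists_arcs_attachments (hT : ThreeConnected G) (hC : IsCycleEdges G C)
    (hk : k₀ ∈ G.support) (hkC : k₀ ∉ verts C) {c : V} (hc : c ∈ verts C)
    (hcA : c ∉ attachments G C k₀) :
    ∃ k ∈ attachments G C k₀, ∃ k' ∈ attachments G C k₀, ∃ p q : G.Walk k k', Arcs C p q ∧
      c ∈ innerVerts p ∧ ∀ z ∈ innerVerts p, z ∉ attachments G C k₀ := by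
  obtain ⟨n₁, hn₁, -, -⟩ := exists_mem_attachments_ne_ne hT hC hk hkC hc hc
  obtain ⟨n₂, hn₂, hne, -⟩ := exists_mem_attachments_ne_ne hT hC hk hkC hn₁.1 hn₁.1
  obtain ⟨p, q, h⟩ := hC.exists_arcs hn₁.1 hn₂.1 hne.symm
  obtain ⟨k, hkA, k', hkA', p', q', h', hcp, hmin⟩ := (h.mem_verts.1 hc).elim
    (h.exists_minimal hn₁ hn₂) (h.swap.exists_minimal hn₁ hn₂)
  exact ⟨k, hkA, k', hkA', p', q', h',
    ⟨hcp, fun h => hcA (h ▸ hkA), fun h => hcA (h ▸ hkA')⟩, hmin⟩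

theorem exists_isEar_crossing (hT : ThreeConnected G) (hC : IsCycleEdges G C) {k k' c n : V}
    {p q : G.Walk k k'} (h : Arcs C p q) (hc : c ∈ innerVerts p) (hn : n ∈ innerVerts q)
    (hp : ∀ z ∈ innerVerts p, z ∉ attachments G C k₀) :
    ∃ y ∈ innerVerts p, ∃ z ∈ innerVerts q, ∃ j : G.Walk y z, IsEar C j ∧
      ∀ t ∈ innerVerts j, t ∉ outerComponent G C k₀ := by
  have hcC := h.mem_verts.2 (.inl hc.1)
  have hnC := h.mem_verts.2 (.inr hn.1)
  obtain ⟨y, hy, z, hz, j, hj, hjk, hjpq⟩ := exists_isPath_between (hT.reachableIn k k' c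
    (hC.mem_support hcC) n (hC.mem_support hnC) hc.2.1 hc.2.2 hn.2.1 hn.2.2) hc hn
  have hyC : y ∈ verts C := h.mem_verts.2 (.inl hy.1)
  have hjC : ∀ t ∈ innerVerts j, t ∉ verts C := fun t ht htC =>
    (h.mem_verts.1 htC).elim (fun htp => (hjpq t ht).1 ⟨htp, hjk t ht.1⟩)
      fun htq => (hjpq t ht).2 ⟨htq, hjk t ht.1⟩
  have hear : IsEar C j := by
    obtain ⟨p', q', h', hk, hk'⟩ := h.exists_cross hy hz
    exact isEar_of_isPath hj hjC fun _ => h'.notMem_of_mem_innerVerts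
      ⟨hk, hy.2.1.symm, hz.2.1.symm⟩ ⟨hk', hy.2.2.symm, hz.2.2.symm⟩
  refine ⟨y, hy, z, hz, j, hear, fun t ht htK => ?_⟩
  -- Following `j` backwards from `t`, its end `y` would be an attachment.
  obtain ⟨r, s, hr, -, rfl⟩ := hj.mem_support_iff_exists_append.1 ht.1
  have hyt : ReachableIn G {x | x ∈ r.support} t y := ⟨r.reverse, by simp⟩
  obtain ⟨a, x, hta, hax, hxC, hx⟩ := hyt.exists_adj_mem_of_notMem (verts C) (hjC t ht) hyC
  have hxy : x = y := by
    by_contra hxy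
    refine hjC x ⟨by simp [hx.out], hxy, ?_⟩ hxC
    rintro rfl
    exact ht.2.2 (eq_of_mem_support_of_mem_support hj hx s.end_mem_support).symm
  subst hxy
  exact hp x hy ⟨hyC, a, ReachableIn.trans htK (hta.mono fun _ h => h.2), hax⟩

namespace GeneratesLarger

theorem of_notMem_attachments (hS : GeneratesLarger G S C k₀) (hT : ThreeConnected G)
    (hC : IsCycleEdges G C) (hk : k₀ ∈ G.support) (hkC : k₀ ∉ verts C) {c : V}
    (hc : c ∈ verts C) (hcA : c ∉ attachments G C k₀) : SymmDiffClosure S C := by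
  obtain ⟨k, hkA, k', hkA', p, q, h, hcp, hp⟩ := exists_arcs_attachments hT hC hk hkC hc hcA
  obtain ⟨n, hnA, hnk, hnk'⟩ := exists_mem_attachments_ne_ne hT hC hk hkC hkA.1 hkA'.1
  have hn : n ∈ innerVerts q := ⟨(h.mem_verts.1 hnA.1).resolve_left
    fun hnp => hp n ⟨hnp, hnk, hnk'⟩ hnA, hnk, hnk'⟩
  obtain ⟨y, hy, z, hz, j, hj, hjK⟩ := exists_isEar_crossing hT hC h hcp hn hp
  obtain ⟨p', q', h', hk, hk'⟩ := h.exists_cross hy hz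
  exact hS.of_isEar hkC h' hj hjK ⟨hk, hy.2.1.symm, hz.2.1.symm⟩ hkA
    ⟨hk', hy.2.2.symm, hz.2.2.symm⟩ hkA'

theorem of_not_induced (hS : GeneratesLarger G S C k₀) (hC : IsCycleEdges G C)
    (hkC : k₀ ∉ verts C) (hall : ∀ c ∈ verts C, c ∈ attachments G C k₀) {u w : V}
    (hu : u ∈ verts C) (hw : w ∈ verts C) (huw : G.Adj u w) (he : s(u, w) ∉ C) :
    SymmDiffClosure S C := by
  obtain ⟨p, q, h⟩ := hC.exists_arcs hu hw huw.ne
  obtain ⟨n, hn⟩ := h.exists_mem_innerVerts_left he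
  obtain ⟨n', hn'⟩ := h.swap.exists_mem_innerVerts_left he
  refine hS.of_isEar hkC h (isEar_toWalk huw he) (fun z hz => ?_)
    hn (hall n (h.mem_verts.2 (.inl hn.1))) hn' (hall n' (h.mem_verts.2 (.inr hn'.1)))
  exact absurd (by simp) (notMem_edges_of_mem_innerVerts (by simp [huw.ne]) hz)

theorem of_notMem_outerComponent (hS : GeneratesLarger G S C k₀) (hT : ThreeConnected G)
    (hC : IsCycleEdges G C) (hk : k₀ ∈ G.support) (hkC : k₀ ∉ verts C) {b : V}
    (hb : b ∈ G.support) (hbC : b ∉ verts C) (hbK : b ∉ outerComponent G C k₀) :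
    SymmDiffClosure S C := by
  obtain ⟨u, hu, w, hw, huw, j, hj, ⟨l, hl⟩, hjb⟩ := exists_isEar_outerComponent hT hC hb hbC
  have hjK : ∀ z ∈ innerVerts j, z ∉ outerComponent G C k₀ := fun z hz hzK =>
    hbK (ReachableIn.trans hzK (ReachableIn.symm (hjb hz)))
  have key {p q : G.Walk u w} (h : Arcs C p q) :
      SymmDiffClosure S (p.edges.toFinset ∪ j.edges.toFinset) := by
    have hK := fun k hk => hj.notMem_verts_union_of_mem_outerComponent h hjK (k := k) hk
    have hcyc := (hj.arcs h).isCycleEdges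
    have hk₀ := hK k₀ (.refl hkC)
    rcases (outerComponent_mono hK).eq_or_ssubset with heq | hss
    · have hS' : GeneratesLarger G S (p.edges.toFinset ∪ j.edges.toFinset) k₀ :=
        fun D hD hkD hDK => hS D hD hkD (heq ▸ hDK)
      refine hS'.of_notMem_attachments hT hcyc hk hk₀ ((hj.arcs h).mem_verts.2 (.inr hl.1)) ?_
      rintro ⟨-, k, hkK, hkl⟩
      rw [← heq] at hkK
      exact hjK l hl (mem_outerComponent_of_adj hkK hkl (hj.notMem_verts l hl))
    · exact hS _ hcyc hk₀ hss
  obtain ⟨p, q, h⟩ := hC.exists_arcs hu hw huw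
  exact hj.symmDiffClosure h (key h) (key h.swap)

theorem of_not_isPeripheral (hS : GeneratesLarger G S C k₀) (hT : ThreeConnected G)
    (hC : IsCycleEdges G C) (hk : k₀ ∈ G.support) (hkC : k₀ ∉ verts C)
    (hper : ¬ IsPeripheral G C) : SymmDiffClosure S C := by
  by_cases hall : ∀ c ∈ verts C, c ∈ attachments G C k₀
  · by_cases hind : ∀ u ∈ verts C, ∀ w ∈ verts C, G.Adj u w → s(u, w) ∈ C
    · by_cases hcon : ∀ b ∈ G.support, b ∉ verts C → b ∈ outerComponent G C k₀
      · exact absurd ⟨⟨hC, hind⟩, fun a ha b hb haC hbC =>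
          (hcon a ha haC).symm.trans (hcon b hb hbC)⟩ hper
      · push Not at hcon
        obtain ⟨b, hb, hbC, hbK⟩ := hcon
        exact hS.of_notMem_outerComponent hT hC hk hkC hb hbC hbK
    · push Not at hind
      obtain ⟨u, hu, w, hw, huw, he⟩ := hind
      exact hS.of_not_induced hC hkC hall hu hw huw he
  · push Not at hall
    obtain ⟨c, hc, hcA⟩ := hall
    exact hS.of_notMem_attachments hT hC hk hkC hc hcA

end GeneratesLarger

theorem IsCycleEdges.symmDiffClosure_isPeripheral_notMem [Finite V] (hC : IsCycleEdges G C)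
    (hT : ThreeConnected G) (hk : k₀ ∈ G.support) (hkC : k₀ ∉ verts C) :
    SymmDiffClosure {D | IsPeripheral G D ∧ k₀ ∉ verts D} C := by
  induction hK : outerComponent G C k₀ using WellFoundedGT.induction generalizing C with
  | _ K ih =>
    subst hK
    by_cases hper : IsPeripheral G C
    · exact .of_mem ⟨hper, hkC⟩
    · exact GeneratesLarger.of_not_isPeripheral
        (fun D hD hkD hDK => ih _ hDK hD hkD rfl) hT hC hk hkC hper

theorem IsCycleEdges.exists_adj_notMem (hC : IsCycleEdges G C) (hT : ThreeConnected G) {v : V}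
    (hv : v ∈ verts C) : ∃ t, G.Adj v t ∧ s(v, t) ∉ C := by
  obtain ⟨y, z, -, hyz⟩ := hC.exists_forall_mem_iff hv
  have hvy := hC.adj ((hyz y).2 (.inl rfl))
  have hvz := hC.adj ((hyz z).2 (.inr rfl))
  obtain ⟨t, hvt, hty, htz⟩ := hT.exists_adj_ne_ne (hC.mem_support hv) hvy.ne hvz.ne
  exact ⟨t, hvt, by simp [hyz, hty, htz]⟩

theorem IsCycleEdges.symmDiffClosure_isPeripheral [Finite V] (hC : IsCycleEdges G C)
    (hT : ThreeConnected G) : SymmDiffClosure {D | IsPeripheral G D} C := by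
  have of_notMem {k : V} {D : Finset (Sym2 V)} (hD : IsCycleEdges G D) (hk : k ∈ G.support)
      (hkD : k ∉ verts D) : SymmDiffClosure {D | IsPeripheral G D} D :=
    (hD.symmDiffClosure_isPeripheral_notMem hT hk hkD).mono fun _ h => h.1
  by_cases hham : ∃ k ∈ G.support, k ∉ verts C
  · obtain ⟨k, hk, hkC⟩ := hham
    exact of_notMem hC hk hkC
  -- A chord splits a Hamiltonian cycle into two cycles which are not Hamiltonian.
  push Not at hham
  obtain ⟨v, w, hvw⟩ := hC.exists_mem
  obtain ⟨t, hvt, he⟩ := hC.exists_adj_notMem hT (left_mem_verts hvw)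
  have hear := isEar_toWalk hvt he
  have key {p q : G.Walk v t} (h : Arcs C p q) : SymmDiffClosure {D | IsPeripheral G D}
      (p.edges.toFinset ∪ hvt.toWalk.edges.toFinset) := by
    obtain ⟨n, hn⟩ := h.swap.exists_mem_innerVerts_left he
    exact of_notMem (hear.arcs h).isCycleEdges (hC.mem_support (h.mem_verts.2 (.inr hn.1)))
      (hear.notMem_verts_union h hn)
  obtain ⟨p, q, h⟩ := hC.exists_arcs (left_mem_verts hvw) (hham t ⟨v, hvt.symm⟩) hvt.ne
  exact hear.symmDiffClosure h (key h) (key h.swap)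

theorem ThreeConnected.exists_isCycleEdges_notMem_verts (hT : ThreeConnected G) {x y a : V}
    (hxy : G.Adj x y) (hax : a ≠ x) (hay : a ≠ y) :
    ∃ C, IsCycleEdges G C ∧ s(x, y) ∈ C ∧ a ∉ verts C := by
  obtain ⟨t, hxt, hty, hta⟩ := hT.exists_adj_ne_ne ⟨y, hxy⟩ hxy.ne hax.symm
  obtain ⟨p, hp, hpxa⟩ := (hT.reachableIn x a t ⟨x, hxt.symm⟩ y ⟨x, hxy.symm⟩ hxt.ne' hta
    hxy.ne' hay.symm).exists_isPath
  have hxp : x ∉ p.support := fun h => (hpxa x h).1 rfl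
  have hap : a ∉ p.support := fun h => (hpxa a h).2 rfl
  have he : s(y, x) ∉ (Walk.cons hxt p).edges := by
    have : s(y, x) ∉ p.edges := fun h => hxp (p.snd_mem_support_of_mem_edges h)
    simp [this, hxy.ne', hty.symm]
  refine ⟨_, .of_isPath hxy.symm (hp.cons hxp) he, by simp [Sym2.eq_swap], ?_⟩
  rw [Finset.insert_eq, verts_union, Finset.mem_union, mem_verts_edges Walk.not_nil_cons]
  simp [verts, hax, hay, hap]

theorem ThreeConnected.exists_isPeripheral [Finite V] (hT : ThreeConnected G) {x y a : V}
    (hxy : G.Adj x y) (ha : a ∈ G.support) (hax : a ≠ x) (hay : a ≠ y) :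
    ∃ D, IsPeripheral G D ∧ s(x, y) ∈ D ∧ a ∉ verts D := by
  obtain ⟨C, hC, hxyC, haC⟩ := hT.exists_isCycleEdges_notMem_verts hxy hax hay
  have hgen := hC.symmDiffClosure_isPeripheral_notMem hT ha haC
  by_contra! hcon
  suffices h : s(x, y) ∉ C from h hxyC
  clear hC hxyC haC
  induction hgen with
  | of_mem hD => exact fun hxyD => hD.2 (hcon _ hD.1 hxyD)
  | symmDiff _ _ hA hB => simp [Finset.mem_symmDiff, hA, hB]

end Generation

section ThreePaths

variable {V : Type*} {G : SimpleGraph V} {S A B : Set V} {a b u w x y : V}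

theorem exists_adj_or_exists_component (hAB : Disjoint A B) (ha : a ∈ A) (hb : b ∈ B)
    (h : ReachableIn G S a b) : (∃ s ∈ A, ∃ t ∈ B, G.Adj s t) ∨
      ∃ l, (∃ s, ReachableIn G (S \ (A ∪ B)) l s ∧ ∃ t ∈ A, G.Adj s t) ∧
        ∃ s, ReachableIn G (S \ (A ∪ B)) l s ∧ ∃ t ∈ B, G.Adj s t := by
  obtain ⟨y, hy, z, hz, p, hp, hpS, hpAB⟩ := exists_isPath_between h ha hb
  have hyz : y ≠ z := fun h => hAB.ne_of_mem hy hz h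
  rcases (innerVerts p).eq_empty_or_nonempty with hin | hin
  · exact .inl ⟨y, hy, z, hz, p.adj_of_mem_edges (mem_edges_of_innerVerts_eq_empty p hyz hin)⟩
  have hsub : innerVerts p ⊆ S \ (A ∪ B) := fun t ht => by
    have := hpAB t ht
    exact ⟨hpS t ht.1, by simp [this]⟩
  obtain ⟨l, hl, hyl⟩ := exists_mem_innerVerts_adj_left hp hin
  obtain ⟨s, hs, hzs⟩ := exists_mem_innerVerts_adj_right hp hin
  refine .inr ⟨l, ⟨l, .refl (hsub hl), y, hy, hyl.symm⟩, s, ?_, z, hz, hzs.symm⟩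
  exact (reachableIn_of_connected (connected_induce_innerVerts hp hin) hl hs).mono hsub

theorem false_of_component_adj_three_paths (hG : IsPlanar G) (huw : u ≠ w)
    {p : Fin 3 → G.Walk u w} (hp : ∀ i, (p i).IsPath)
    (hpp : ∀ i j, i < j → Disjoint (innerVerts (p i)) (innerVerts (p j))) (l : V)
    (hl : ∀ i, ∃ s, ReachableIn G {z | ∀ i, z ∉ (p i).support} l s ∧
      ∃ t ∈ innerVerts (p i), G.Adj s t) : False := by
  have hne (i : Fin 3) : (innerVerts (p i)).Nonempty := by
    obtain ⟨s, -, t, ht, -⟩ := hl i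
    exact ⟨t, ht⟩
  have hlM : ∀ i, l ∉ (p i).support := (hl 0).elim fun s hs => hs.1.left_mem
  refine false_of_K33_branchSets hG
    ![{u}, {w}, {z | ReachableIn G {z | ∀ i, z ∉ (p i).support} l z}] (fun i => innerVerts (p i))
    ?_ (fun i => connected_induce_innerVerts (hp i) (hne i)) ?_ hpp ?_ ?_
  · intro i
    fin_cases i
    exacts [connected_induce_singleton _, connected_induce_singleton _,
      connected_induce_setOf_reachableIn hlM]
  · have huL : ¬ ReachableIn G {z | ∀ i, z ∉ (p i).support} l u := fun h =>
      h.right_mem 0 (p 0).start_mem_support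
    have hwL : ¬ ReachableIn G {z | ∀ i, z ∉ (p i).support} l w := fun h =>
      h.right_mem 0 (p 0).end_mem_support
    intro i j hij
    fin_cases i <;> fin_cases j <;> simp_all
  · intro i j
    fin_cases i
    · simp [innerVerts]
    · simp [innerVerts]
    · exact Set.disjoint_left.2 fun z hz hz' => ReachableIn.right_mem hz j hz'.1
  · intro i j
    fin_cases i
    · exact ⟨u, rfl, exists_mem_innerVerts_adj_left (hp j) (hne j)⟩
    · exact ⟨w, rfl, exists_mem_innerVerts_adj_right (hp j) (hne j)⟩
    · exact hl j

theorem false_of_triangle_adj_edge (hG : IsPlanar G) (hxy : G.Adj x y) {A : Fin 3 → Set V}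
    (hA : ∀ i, (G.induce (A i)).Connected) (hAA : ∀ i j, i < j → Disjoint (A i) (A j))
    (hadj : ∀ i j, i < j → ∃ a ∈ A i, ∃ b ∈ A j, G.Adj a b) (hx : ∀ i, x ∉ A i)
    (hy : ∀ i, y ∉ A i) (hxA : ∀ i, ∃ t ∈ A i, G.Adj x t) (hyA : ∀ i, ∃ t ∈ A i, G.Adj y t) :
    False := by
  refine false_of_K5_branchSets hG ![{x}, {y}, A 0, A 1, A 2] ?_ ?_ ?_
  · intro i
    fin_cases i
    exacts [connected_induce_singleton _, connected_induce_singleton _, hA 0, hA 1, hA 2]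
  · intro i j hij
    have := hxy.ne
    fin_cases i <;> fin_cases j <;> first | exact absurd hij (by decide) | simp_all
  · intro i j hij
    fin_cases i <;> fin_cases j <;> first | exact absurd hij (by decide) | simp_all

theorem exists_connected_union_adj (hA : (G.induce A).Connected) (hAB : Disjoint A B)
    (ha : a ∈ A) (hb : b ∈ B) (h : ReachableIn G S a b) :
    ∃ L ⊆ S \ (A ∪ B), (G.induce (A ∪ L)).Connected ∧ (∃ s ∈ A ∪ L, ∃ t ∈ B, G.Adj s t) ∧
      ∀ z ∈ L, (∃ s, ReachableIn G (S \ (A ∪ B)) z s ∧ ∃ t ∈ A, G.Adj s t) ∧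
        ∃ s, ReachableIn G (S \ (A ∪ B)) z s ∧ ∃ t ∈ B, G.Adj s t := by
  rcases exists_adj_or_exists_component hAB ha hb h with
    ⟨s, hs, t, ht, hst⟩ | ⟨l, ⟨s, hs, t, ht, hst⟩, s', hs', hsB⟩
  · exact ⟨∅, by simp, by rwa [Set.union_empty], ⟨s, .inl hs, t, ht, hst⟩, by simp⟩
  refine ⟨{t | ReachableIn G (S \ (A ∪ B)) l t}, fun t ht => ReachableIn.right_mem ht, ?_,
    ⟨s', .inr hs', hsB⟩, fun z hz => ?_⟩
  · exact connected_induce_union hA.preconnected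
      (connected_induce_setOf_reachableIn hs.left_mem).preconnected ht hs hst.symm
  · exact ⟨⟨s, (ReachableIn.symm hz).trans hs, t, ht, hst⟩,
      s', (ReachableIn.symm hz).trans hs', hsB⟩

theorem exists_connected_innerVerts_union_adj {p : Fin 3 → G.Walk x y} (hp : ∀ i, (p i).IsPath)
    (hpp : Pairwise fun i j => Disjoint (innerVerts (p i)) (innerVerts (p j))) {i : Fin 3}
    (ha : a ∈ innerVerts (p i)) (hb : b ∈ innerVerts (p (i + 1)))
    (hab : ReachableIn G {z | z ∉ (p (i + 2)).support} a b) :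
    ∃ L ⊆ {z | ∀ i, z ∉ (p i).support}, (G.induce (innerVerts (p i) ∪ L)).Connected ∧
      (∃ s ∈ innerVerts (p i) ∪ L, ∃ t ∈ innerVerts (p (i + 1)), G.Adj s t) ∧
      ∀ z ∈ L, ∀ j ≠ i + 2, ∃ s, ReachableIn G {z | ∀ i, z ∉ (p i).support} z s ∧
        ∃ t ∈ innerVerts (p j), G.Adj s t := by
  have hsub : {z | z ∉ (p (i + 2)).support} \ (innerVerts (p i) ∪ innerVerts (p (i + 1))) ⊆
      {z | ∀ i, z ∉ (p i).support} := by
    rintro z ⟨hz, hzi⟩ j hj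
    have hzx : z ≠ x := by
      rintro rfl
      exact hz (p _).start_mem_support
    have hzy : z ≠ y := by
      rintro rfl
      exact hz (p _).end_mem_support
    obtain rfl | rfl | rfl : j = i ∨ j = i + 1 ∨ j = i + 2 := by lia
    exacts [hzi (.inl ⟨hj, hzx, hzy⟩), hzi (.inr ⟨hj, hzx, hzy⟩), hz hj]
  obtain ⟨L, hL, hLconn, hLadj, hLcomp⟩ := exists_connected_union_adj
    (connected_induce_innerVerts (hp i) ⟨a, ha⟩) (hpp (by lia)) ha hb hab
  refine ⟨L, hL.trans hsub, hLconn, hLadj, fun z hz j hj => ?_⟩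
  obtain rfl | rfl : j = i ∨ j = i + 1 := by lia
  · exact (hLcomp z hz).1.imp fun s hs => ⟨hs.1.mono hsub, hs.2⟩
  · exact (hLcomp z hz).2.imp fun s hs => ⟨hs.1.mono hsub, hs.2⟩

/-- The three paths can be turned into three pairwise adjacent sets, each adjacent to `x` and `y`,
unless some component of the rest is adjacent to all of them. -/
theorem false_of_adj_three_paths (hG : IsPlanar G) (hxy : G.Adj x y) {p : Fin 3 → G.Walk x y}
    (hp : ∀ i, (p i).IsPath)
    (hpp : Pairwise fun i j => Disjoint (innerVerts (p i)) (innerVerts (p j)))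
    (hlink : ∀ i, ∃ a ∈ innerVerts (p i), ∃ b ∈ innerVerts (p (i + 1)),
      ReachableIn G {z | z ∉ (p (i + 2)).support} a b) : False := by
  choose a ha b hb hab using hlink
  choose L hLM hLconn hLadj hLcomp using fun i =>
    exists_connected_innerVerts_union_adj hp hpp (ha i) (hb i) (hab i)
  have hLL (i j : Fin 3) (hij : i < j) : Disjoint (L i) (L j) := by
    refine Set.disjoint_left.2 fun z hi hj => ?_
    refine false_of_component_adj_three_paths hG hxy.ne hp (fun i j h => hpp h.ne) z fun k => ?_
    by_cases hk : k = i + 2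
    · exact hLcomp j z hj k (by lia)
    · exact hLcomp i z hi k hk
  have hLp (i j : Fin 3) : Disjoint (L i) (innerVerts (p j)) :=
    Set.disjoint_left.2 fun z hz hz' => hLM i hz j hz'.1
  refine false_of_triangle_adj_edge hG hxy hLconn (fun i j hij => ?_) (fun i j hij => ?_)
    (fun i => ?_) (fun i => ?_) (fun i => ?_) (fun i => ?_)
  · simp only [Set.disjoint_union_left, Set.disjoint_union_right]
    exact ⟨⟨hpp hij.ne, hLp i j⟩, (hLp j i).symm, hLL i j hij⟩
  · obtain rfl | rfl : j = i + 1 ∨ i = j + 1 := by lia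
    · obtain ⟨s, hs, t, ht, hst⟩ := hLadj i
      exact ⟨s, hs, t, .inl ht, hst⟩
    · obtain ⟨s, hs, t, ht, hst⟩ := hLadj j
      exact ⟨t, .inl ht, s, hs, hst.symm⟩
  · exact fun h => h.elim (fun h => h.2.1 rfl) fun h => hLM i h i (p i).start_mem_support
  · exact fun h => h.elim (fun h => h.2.2 rfl) fun h => hLM i h i (p i).end_mem_support
  · obtain ⟨t, ht, hxt⟩ := exists_mem_innerVerts_adj_left (hp i) ⟨a i, ha i⟩
    exact ⟨t, .inl ht, hxt⟩
  · obtain ⟨t, ht, hyt⟩ := exists_mem_innerVerts_adj_right (hp i) ⟨a i, ha i⟩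
    exact ⟨t, .inl ht, hyt⟩

end ThreePaths

section Faces

variable {V : Type*} {G : SimpleGraph V} {C D : Finset (Sym2 V)} {a b u w x y : V}

theorem IsInducedCycle.eq_of_verts_subset (hC : IsInducedCycle G C) (hD : IsCycleEdges G D)
    (h : verts D ⊆ verts C) : D = C := by
  refine hD.eq_of_subset hC.isCycleEdges ?_
  rintro ⟨a, b⟩ he
  exact hC.induced a (h (left_mem_verts he)) b (h (right_mem_verts he)) (hD.adj he)

theorem Arcs.disjoint_innerVerts {p q : G.Walk u w} (h : Arcs C p q) :
    Disjoint (innerVerts p) (innerVerts q) :=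
  Set.disjoint_left.2 fun z hz hz' => (h.inter z hz.1 hz'.1).elim hz.2.1 hz.2.2

theorem IsInducedCycle.not_adj_of_mem_innerVerts (hC : IsInducedCycle G C) {p q : G.Walk u w}
    (h : Arcs C p q) (hx : x ∈ innerVerts p) (hy : y ∈ innerVerts q) : ¬ G.Adj x y := by
  intro hxy
  have he := hC.induced x (h.mem_verts.2 (.inl hx.1)) y (h.mem_verts.2 (.inr hy.1)) hxy
  rcases h.mem_iff.1 he with he | he
  · exact h.disjoint_innerVerts.ne_of_mem ⟨p.snd_mem_support_of_mem_edges he, hy.2⟩ hy rfl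
  · exact h.disjoint_innerVerts.ne_of_mem hx ⟨q.fst_mem_support_of_mem_edges he, hx.2⟩ rfl

namespace IsPeripheral

theorem exists_adj_mem_innerVerts (hC : IsPeripheral G C) {q : G.Walk u w} (hu : u ∈ verts C)
    (hw : w ∈ verts C) (hq : q.IsPath) (hqne : (innerVerts q).Nonempty)
    (hqC : ∀ z ∈ innerVerts q, z ∉ verts C) (ha : a ∈ G.support) (haC : a ∉ verts C)
    (haq : a ∉ q.support) :
    ∃ b, ReachableIn G ({z | z ∉ verts C} \ {z | z ∈ q.support}) a b ∧
      ∃ n ∈ innerVerts q, G.Adj b n := by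
  obtain ⟨c, hc, huc⟩ := exists_mem_innerVerts_adj_left hq hqne
  obtain ⟨b, n, hab, hbn, hnq, hnC⟩ := (hC.reachableIn a ha c ⟨u, huc.symm⟩ haC
    (hqC c hc)).exists_adj_mem_of_notMem {z | z ∈ q.support} haq hc.1
  exact ⟨b, hab, n, ⟨hnq, fun h => hnC (h ▸ hu), fun h => hnC (h ▸ hw)⟩, hbn⟩

theorem not_reachableIn_of_arcs (hC : IsPeripheral G C) (hG : IsPlanar G)
    {p p' q : G.Walk u w} (h : Arcs C p p') (hq : q.IsPath) (hqne : (innerVerts q).Nonempty)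
    (hqC : ∀ z ∈ innerVerts q, z ∉ verts C) (ha : a ∈ innerVerts p) (hb : b ∈ innerVerts p') :
    ¬ ReachableIn G {z | z ∉ q.support} a b := by
  intro hab
  have hpp' := h.disjoint_innerVerts
  have hpq : Disjoint (innerVerts p) (innerVerts q) := Set.disjoint_left.2 fun z hz hz' =>
    hqC z hz' (h.mem_verts.2 (.inl hz.1))
  have hp'q : Disjoint (innerVerts p') (innerVerts q) := Set.disjoint_left.2 fun z hz hz' =>
    hqC z hz' (h.mem_verts.2 (.inr hz.1))
  rcases exists_adj_or_exists_component hpp' ha hb hab with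
    ⟨y, hy, z, hz, hyz⟩ | ⟨l, ⟨s, hls, t, ht, hst⟩, hlp'⟩
  · exact hC.not_adj_of_mem_innerVerts h hy hz hyz
  have hsub : {z | z ∉ q.support} \ (innerVerts p ∪ innerVerts p') ⊆ {z | z ∉ verts C} \
      {z | z ∈ q.support} := by
    rintro z ⟨hzq, hz⟩
    have hzu : z ≠ u := fun h => hzq (h ▸ q.start_mem_support)
    have hzw : z ≠ w := fun h => hzq (h ▸ q.end_mem_support)
    refine ⟨fun hzC => hz ?_, hzq⟩
    exact (h.mem_verts.1 hzC).imp (fun h => ⟨h, hzu, hzw⟩) fun h => ⟨h, hzu, hzw⟩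
  have hsub' : {z | z ∉ verts C} \ {z | z ∈ q.support} ⊆
      {z | ∀ i, z ∉ ((![p, p', q] : Fin 3 → G.Walk u w) i).support} := by
    rintro z ⟨hzC, hzq⟩ i
    rw [Set.mem_ofPred_eq, h.mem_verts, not_or] at hzC
    fin_cases i
    exacts [hzC.1, hzC.2, hzq]
  obtain ⟨s', hs', hs'q⟩ := hC.exists_adj_mem_innerVerts
    (h.mem_verts.2 (.inl p.start_mem_support)) (h.mem_verts.2 (.inl p.end_mem_support)) hq hqne hqC
    ⟨t, hst⟩ (hsub hls.right_mem).1 (hsub hls.right_mem).2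
  refine false_of_component_adj_three_paths hG h.ne (p := ![p, p', q]) ?_ ?_ l ?_
  · intro i
    fin_cases i
    exacts [h.left, h.right, hq]
  · intro i j hij
    fin_cases i <;> fin_cases j <;> first | exact absurd hij (by decide) | assumption
  · intro i
    fin_cases i
    · exact ⟨s, hls.mono (hsub.trans hsub'), t, ht, hst⟩
    · exact hlp'.imp fun s hs => ⟨hs.1.mono (hsub.trans hsub'), hs.2⟩
    · exact ⟨s', (hls.mono (hsub.trans hsub')).trans (hs'.mono hsub'), hs'q⟩

theorem inter_of_arcs (hC : IsPeripheral G C) (hG : IsPlanar G) (hT : ThreeConnected G)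
    (hD : IsPeripheral G D) {q q' : G.Walk u w} (h : Arcs D q q') (hq : (innerVerts q).Nonempty)
    (hqC : ∀ z ∈ innerVerts q, z ∉ verts C) (hu : u ∈ verts C) (hw : w ∈ verts C) :
    ∀ z ∈ verts C, z ∈ verts D → z = u ∨ z = w := by
  intro z hzC hzD
  by_contra! ⟨hzu, hzw⟩
  have hzq : z ∉ q.support := fun hz => hqC z ⟨hz, hzu, hzw⟩ hzC
  have hzq' : z ∈ innerVerts q' := ⟨(h.mem_verts.1 hzD).resolve_left hzq, hzu, hzw⟩
  obtain ⟨p, p', k, hzp⟩ : ∃ p p' : G.Walk u w, Arcs C p p' ∧ z ∈ innerVerts p := by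
    obtain ⟨p, p', k⟩ := hC.isCycleEdges.exists_arcs hu hw h.ne
    rcases k.mem_verts.1 hzC with hz | hz
    exacts [⟨p, p', k, hz, hzu, hzw⟩, ⟨p', p, k.swap, hz, hzu, hzw⟩]
  have huwC : s(u, w) ∉ C := fun he => by
    obtain ⟨c, hc⟩ := hq
    have huD : u ∈ verts D := h.mem_verts.2 (.inl q.start_mem_support)
    have hwD : w ∈ verts D := h.mem_verts.2 (.inl q.end_mem_support)
    exact h.notMem_of_mem_innerVerts hc hzq' (hD.induced u huD w hwD (hC.isCycleEdges.adj he))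
  obtain ⟨b, hb⟩ := k.swap.exists_mem_innerVerts_left huwC
  have hsep := hC.not_reachableIn_of_arcs hG k h.left hq hqC hzp hb
  have hbC : b ∈ verts C := k.mem_verts.2 (.inr hb.1)
  have hbD : b ∉ verts D := fun hbD => by
    have hbq : b ∉ q.support := fun hb' => hqC b ⟨hb', hb.2⟩ hbC
    have hbq' : b ∈ innerVerts q' := ⟨(h.mem_verts.1 hbD).resolve_left hbq, hb.2⟩
    refine hsep ((reachableIn_of_connected (connected_induce_innerVerts h.right ⟨z, hzq'⟩) hzq'
      hbq').mono fun t ht ht' => ?_)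
    exact (h.inter t ht' ht.1).elim ht.2.1 ht.2.2
  obtain ⟨t, hzt, htD⟩ := hD.isCycleEdges.exists_adj_notMem hT hzD
  have htD : t ∉ verts D := fun ht => htD (hD.induced z hzD t ht hzt)
  have htb := hD.reachableIn t ⟨z, hzt.symm⟩ b (hC.isCycleEdges.mem_support hbC) htD hbD
  have hsub : {t | t ∉ verts D} ⊆ {t | t ∉ q.support} := fun t ht htq =>
    ht (h.mem_verts.2 (.inl htq))
  exact hsep ((reachableIn_of_adj hzq (hsub htD) hzt).trans (htb.mono hsub))

theorem inter (hC : IsPeripheral G C) (hG : IsPlanar G) (hT : ThreeConnected G)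
    (hD : IsPeripheral G D) (hCD : C ≠ D) (hxy : x ≠ y) (hx : x ∈ verts C) (hxD : x ∈ verts D)
    (hy : y ∈ verts C) (hyD : y ∈ verts D) : ∀ z ∈ verts C, z ∈ verts D → z = x ∨ z = y := by
  obtain ⟨c, hcD, hcC⟩ : ∃ c ∈ verts D, c ∉ verts C := Finset.not_subset.1 fun h =>
    hCD (hC.eq_of_verts_subset hD.isCycleEdges h).symm
  obtain ⟨q, q', h, hcq⟩ : ∃ q q' : G.Walk x y, Arcs D q q' ∧ c ∈ q.support := by
    obtain ⟨q, q', h⟩ := hD.isCycleEdges.exists_arcs hxD hyD hxy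
    rcases h.mem_verts.1 hcD with hc | hc
    exacts [⟨q, q', h, hc⟩, ⟨q', q, h.swap, hc⟩]
  obtain ⟨u, hu, w, hw, r, r', k, hcr, hr⟩ :=
    h.exists_minimal (N := {z | z ∈ verts C}) hx hy hcq
  have hcr : c ∈ innerVerts r := ⟨hcr, fun h => hcC (h ▸ hu), fun h => hcC (h ▸ hw)⟩
  have key := hC.inter_of_arcs hG hT hD k ⟨c, hcr⟩ hr hu hw
  intro z hz hzD
  have := key z hz hzD
  have := key x hx hxD
  have := key y hy hyD
  grind

theorem eq_or_eq_of_mem (hC : IsPeripheral G C) (hG : IsPlanar G) (hT : ThreeConnected G)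
    (hD : IsPeripheral G D) (hCD : C ≠ D) {F : Finset (Sym2 V)} (hF : IsPeripheral G F)
    (hxyC : s(x, y) ∈ C) (hxyD : s(x, y) ∈ D) (hxyF : s(x, y) ∈ F) : F = C ∨ F = D := by
  by_contra! ⟨hFC, hFD⟩
  have hxy := hC.isCycleEdges.adj hxyC
  let B : Fin 3 → Finset (Sym2 V) := ![C, D, F]
  have hB (i : Fin 3) : IsPeripheral G (B i) := by
    fin_cases i
    exacts [hC, hD, hF]
  have hxyB (i : Fin 3) : s(x, y) ∈ B i := by
    fin_cases i
    exacts [hxyC, hxyD, hxyF]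
  have hBB : Pairwise fun i j => B i ≠ B j :=
    pairwise_of_symm_of_lt (fun _ _ h => h.symm) fun i j hij => by
      fin_cases i <;> fin_cases j <;>
        first | exact absurd hij (by decide) | exact hCD | exact hFC.symm | exact hFD.symm
  choose p hp _ _ hBp using fun i => (hB i).isCycleEdges.exists_isPath_of_mem (hxyB i)
  have hinner (i : Fin 3) {z : V} : z ∈ innerVerts (p i) ↔ z ∈ verts (B i) ∧ z ≠ x ∧ z ≠ y := by
    simp [innerVerts, hBp]
  have hdisj {i j : Fin 3} (hij : i ≠ j) {z : V} (hz : z ∈ innerVerts (p i)) :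
      z ∉ verts (B j) := fun hz' =>
    ((hB i).inter hG hT (hB j) (hBB hij) hxy.ne (left_mem_verts (hxyB i))
      (left_mem_verts (hxyB j)) (right_mem_verts (hxyB i)) (right_mem_verts (hxyB j)) z
      ((hinner i).1 hz).1 hz').elim hz.2.1 hz.2.2
  refine false_of_adj_three_paths hG hxy hp (fun i j hij => Set.disjoint_left.2 fun z hz hz' =>
    hdisj hij hz ((hinner j).1 hz').1) fun i => ?_
  have hthird (j : Fin 3) : (innerVerts (p j)).Nonempty :=
    ((hB j).isCycleEdges.exists_third (hxyB j)).imp fun c hc => (hinner j).2 hc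
  obtain ⟨a, ha⟩ := hthird i
  obtain ⟨b, hb⟩ := hthird (i + 1)
  refine ⟨a, ha, b, hb, ((hB (i + 2)).reachableIn a ?_ b ?_ ?_ ?_).mono fun z hz => ?_⟩
  · exact (hB i).isCycleEdges.mem_support ((hinner i).1 ha).1
  · exact (hB (i + 1)).isCycleEdges.mem_support ((hinner (i + 1)).1 hb).1
  · exact hdisj (by lia) ha
  · exact hdisj (by lia) hb
  · simpa [hBp] using hz

end IsPeripheral

/-- The peripheral cycles of `G`, which for a 3-connected planar graph are the facial cycles. -/
noncomputable def faces [Fintype V] (G : SimpleGraph V) : Finset (Finset (Sym2 V)) :=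
  Finset.univ.filter (IsPeripheral G)

theorem mem_faces [Fintype V] : C ∈ faces G ↔ IsPeripheral G C := by
  simp [faces]

theorem card_filter_mem_faces [Fintype V] (hG : IsPlanar G) (hT : ThreeConnected G) {e : Sym2 V}
    (he : e ∈ G.edgeSet) : ((faces G).filter (e ∈ ·)).card = 2 := by
  obtain ⟨x, y⟩ := e
  have hxy : G.Adj x y := he
  obtain ⟨a, ha, hax, hay, -⟩ := hT.exists_mem_support_ne x y y
  obtain ⟨C, hC, hxyC, haC⟩ := hT.exists_isPeripheral hxy ha hax hay
  -- A second peripheral cycle through the edge is one avoiding some vertex of the first.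
  obtain ⟨c, hc, hcx, hcy⟩ := hC.isCycleEdges.exists_third hxyC
  obtain ⟨D, hD, hxyD, hcD⟩ :=
    hT.exists_isPeripheral hxy (hC.isCycleEdges.mem_support hc) hcx hcy
  have hCD : C ≠ D := fun h => hcD (h ▸ hc)
  refine Finset.card_eq_two.2 ⟨C, D, hCD, Finset.ext fun F => ?_⟩
  rw [Finset.mem_filter, mem_faces, Finset.mem_insert, Finset.mem_singleton]
  constructor
  · exact fun h => hC.eq_or_eq_of_mem hG hT hD hCD h.1 hxyC hxyD h.2
  · rintro (rfl | rfl)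
    exacts [⟨hC, hxyC⟩, ⟨hD, hxyD⟩]

end Faces

/-! ### Euler's formula -/

section CycleSpace

variable {V : Type*} {G : SimpleGraph V} {A C D : Finset (Sym2 V)}

theorem exists_isCycle_of_forall_exists_adj_ne [Finite V] {u v : V} (h : G.Adj u v)
    (hG : ∀ ⦃u v⦄, G.Adj u v → ∃ w ≠ v, G.Adj u w) : ∃ u, ∃ c : G.Walk u u, c.IsCycle := by
  by_contra! hacyclic
  have := Nonempty.intro u
  obtain ⟨a, b, p, hp, hmax⟩ := Walk.exists_isPath_forall_isPath_length_le_length G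
  have hnil : ¬p.Nil := fun hnil => by
    have hle := hmax u v h.toWalk (by simp [h.ne])
    rw [Walk.length_eq_zero_iff.2 hnil, Walk.length_cons] at hle
    lia
  obtain ⟨w, hw, haw⟩ := hG (p.adj_snd hnil)
  refine hw (IsAcyclic.eq_snd_of_adj_start @hacyclic hp haw ?_)
  by_contra hwp
  have hle := hmax _ _ (p.cons haw.symm) (hp.cons hwp)
  rw [Walk.length_cons] at hle
  lia

theorem exists_isCycleEdges_subset [Finite V] (hA : ∀ e ∈ A, e ∈ G.edgeSet)
    (hne : A.Nonempty) (htwo : ∀ ⦃u v⦄, s(u, v) ∈ A → ∃ w ≠ v, s(u, w) ∈ A) :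
    ∃ D ⊆ A, IsCycleEdges G D := by
  let H : SimpleGraph V := fromEdgeSet A
  have hadj : ∀ {u v}, H.Adj u v ↔ s(u, v) ∈ A := fun {u v} => by
    rw [fromEdgeSet_adj, Finset.mem_coe, and_iff_left_iff_imp]
    exact fun h => (mem_edgeSet G |>.1 (hA _ h)).ne
  obtain ⟨⟨u, v⟩, huv⟩ := hne
  obtain ⟨x, c, hc⟩ := exists_isCycle_of_forall_exists_adj_ne (hadj.2 huv) fun u v h => by
    simpa only [hadj] using htwo (hadj.1 h)
  have hcA : c.edges.toFinset ⊆ A := fun e he => by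
    induction e with
    | _ a b => exact hadj.1 (c.adj_of_mem_edges (List.mem_toFinset.1 he))
  have hcyc : IsCycleEdges H c.edges.toFinset := ⟨x, c, hc, rfl⟩
  exact ⟨_, hcA, hcyc.transfer fun e he => hA e (hcA he)⟩

theorem IsCycleEdges.card_filter_mem {v : V} (hC : IsCycleEdges G C) (hv : v ∈ verts C) :
    (C.filter (v ∈ ·)).card = 2 := by
  obtain ⟨y, z, hyz, h⟩ := hC.exists_forall_mem_iff hv
  rw [Finset.card_eq_two]
  refine ⟨s(v, y), s(v, z), by rwa [ne_eq, Sym2.congr_right], Finset.ext fun e => ?_⟩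
  simp only [Finset.mem_filter, Finset.mem_insert, Finset.mem_singleton]
  constructor
  · rintro ⟨he, t, rfl⟩
    simpa only [Sym2.congr_right] using (h t).1 he
  · rintro (rfl | rfl)
    exacts [⟨(h _).2 (.inl rfl), by simp⟩, ⟨(h _).2 (.inr rfl), by simp⟩]

/-- The characteristic vector over `𝔽₂` of the edges of `G` in `C`. -/
noncomputable def edgeIndicator (G : SimpleGraph V) (C : Finset (Sym2 V)) : G.edgeSet → ZMod 2 :=
  fun e => if (e : Sym2 V) ∈ C then 1 else 0

theorem edgeIndicator_symmDiff (C D : Finset (Sym2 V)) :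
    edgeIndicator G (symmDiff C D) = edgeIndicator G C + edgeIndicator G D := by
  funext e
  by_cases hC : (e : Sym2 V) ∈ C <;> by_cases hD : (e : Sym2 V) ∈ D <;>
    simp [edgeIndicator, Finset.mem_symmDiff, hC, hD, CharTwo.add_self_eq_zero]

theorem exists_edgeIndicator_eq [Finite V] (f : G.edgeSet → ZMod 2) :
    ∃ A : Finset (Sym2 V), (∀ e ∈ A, e ∈ G.edgeSet) ∧ edgeIndicator G A = f := by
  have := Fintype.ofFinite V
  refine ⟨(Finset.univ.filter (f · = 1)).map (.subtype _), fun e he => ?_, funext fun e => ?_⟩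
  · exact Finset.property_of_mem_map_subtype _ he
  · have hf : f e = 0 ∨ f e = 1 := by generalize f e = c; revert c; decide
    rcases hf with h | h <;> simp [edgeIndicator, h]

variable [Fintype V]

/-- The boundary map over `𝔽₂` from edges to non-isolated vertices; its kernel is the cycle
space. -/
noncomputable def boundary (G : SimpleGraph V) :
    (G.edgeSet → ZMod 2) →ₗ[ZMod 2] (G.support → ZMod 2) :=
  ((G.incMatrix (ZMod 2)).submatrix (↑) (↑)).mulVecLin

theorem boundary_edgeIndicator_apply (hA : ∀ e ∈ A, e ∈ G.edgeSet) (v : G.support) :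
    boundary G (edgeIndicator G A) v = ((A.filter (↑v ∈ ·)).card : ZMod 2) := by
  have hterm : ∀ e : G.edgeSet, G.incMatrix (ZMod 2) v e * edgeIndicator G A e =
      if (e : Sym2 V) ∈ A.filter (↑v ∈ ·) then 1 else 0 := fun e => by
    simp [incMatrix_apply', edgeIndicator, incidenceSet, ← ite_and, and_comm]
  calc boundary G (edgeIndicator G A) v
      = ∑ e : G.edgeSet, if (e : Sym2 V) ∈ A.filter (↑v ∈ ·) then (1 : ZMod 2) else 0 :=
        Finset.sum_congr rfl fun e _ => hterm e
    _ = ((A.filter (↑v ∈ ·)).subtype (· ∈ G.edgeSet)).card := by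
        rw [Finset.sum_boole]
        congr 2
        ext e
        simp
    _ = (A.filter (↑v ∈ ·)).card := by
        rw [Finset.card_subtype, Finset.filter_true_of_mem]
        exact fun e he => hA e (Finset.mem_of_mem_filter e he)

theorem sum_boundary (f : G.edgeSet → ZMod 2) : ∑ v, boundary G f v = 0 := by
  have hcol (e : G.edgeSet) : ∑ v : G.support, G.incMatrix (ZMod 2) v e = 0 :=
    calc ∑ v : G.support, G.incMatrix (ZMod 2) v e
        = ∑ v, G.incMatrix (ZMod 2) v e := by
          refine Fintype.sum_of_injective _ Subtype.val_injective _ _ (fun v hv => ?_) fun _ => rfl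
          refine incMatrix_of_notMem_incidenceSet _ fun he => hv ?_
          obtain ⟨hadj, w, hw⟩ := he
          rw [hw] at hadj
          exact ⟨⟨v, w, hadj⟩, rfl⟩
      _ = 2 := sum_incMatrix_apply_of_mem_edgeSet _ e.2
      _ = 0 := rfl
  calc ∑ v, boundary G f v
      = ∑ e : G.edgeSet, (∑ v : G.support, G.incMatrix (ZMod 2) v e) * f e := by
        simp only [Finset.sum_mul]
        exact Finset.sum_comm
    _ = 0 := Finset.sum_eq_zero fun e _ => by rw [hcol, zero_mul]

theorem IsCycleEdges.boundary_edgeIndicator (hC : IsCycleEdges G C) :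
    boundary G (edgeIndicator G C) = 0 := by
  funext v
  rw [boundary_edgeIndicator_apply fun e he => hC.mem_edgeSet he]
  by_cases hv : ↑v ∈ verts C
  · rw [hC.card_filter_mem hv]
    rfl
  · rw [Finset.filter_false_of_mem]
    · simp
    · rintro _ he ⟨t, rfl⟩
      exact hv (left_mem_verts he)

theorem exists_isCycleEdges_subset_of_boundary_eq_zero (hA : ∀ e ∈ A, e ∈ G.edgeSet)
    (hne : A.Nonempty) (h : boundary G (edgeIndicator G A) = 0) :
    ∃ D ⊆ A, IsCycleEdges G D := by
  refine exists_isCycleEdges_subset hA hne fun u v huv => ?_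
  have hu : u ∈ G.support := ⟨v, hA _ huv⟩
  have heven : 2 ∣ (A.filter (u ∈ ·)).card := by
    rw [← ZMod.natCast_eq_zero_iff, ← boundary_edgeIndicator_apply hA ⟨u, hu⟩, h, Pi.zero_apply]
  have hmem : s(u, v) ∈ A.filter (u ∈ ·) := by simp [huv]
  have hone : 1 < (A.filter (u ∈ ·)).card :=
    Nat.lt_of_lt_of_le Nat.one_lt_two (Nat.le_of_dvd (Finset.card_pos.2 ⟨_, hmem⟩) heven)
  obtain ⟨e, he, hev⟩ := Finset.exists_mem_ne hone s(u, v)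
  obtain ⟨heA, w, rfl⟩ := Finset.mem_filter.1 he
  exact ⟨w, fun hw => hev (by rw [hw]), heA⟩

theorem edgeIndicator_mem_span_isCycleEdges (hA : ∀ e ∈ A, e ∈ G.edgeSet)
    (h : boundary G (edgeIndicator G A) = 0) :
    edgeIndicator G A ∈ Submodule.span (ZMod 2) (edgeIndicator G '' {C | IsCycleEdges G C}) := by
  induction A using Finset.strongInduction with
  | H A ih =>
    rcases A.eq_empty_or_nonempty with rfl | hne
    · convert Submodule.zero_mem _
      funext e
      simp [edgeIndicator]
    obtain ⟨D, hDA, hD⟩ := exists_isCycleEdges_subset_of_boundary_eq_zero hA hne h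
    have hadd : edgeIndicator G A = edgeIndicator G (A \ D) + edgeIndicator G D := by
      rw [← edgeIndicator_symmDiff, Finset.symmDiff_eq_union Finset.sdiff_disjoint,
        Finset.sdiff_union_of_subset hDA]
    rw [hadd, map_add, hD.boundary_edgeIndicator, add_zero] at h
    have hDne : D.Nonempty := let ⟨a, b, hab⟩ := hD.exists_mem; ⟨_, hab⟩
    rw [hadd]
    refine Submodule.add_mem _ (ih _ (Finset.sdiff_ssubset hDA hDne) ?_ h)
      (Submodule.subset_span ⟨D, hD, rfl⟩)
    exact fun e he => hA e (Finset.mem_sdiff.1 he).1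

theorem ker_boundary_le_span_isCycleEdges : LinearMap.ker (boundary G) ≤
    Submodule.span (ZMod 2) (edgeIndicator G '' {C | IsCycleEdges G C}) := by
  intro f hf
  obtain ⟨A, hA, rfl⟩ := exists_edgeIndicator_eq f
  exact edgeIndicator_mem_span_isCycleEdges hA hf

theorem card_edgeFinset_add_one_le (hne : G.support.Nonempty) :
    G.edgeFinset.card + 1 ≤
      Module.finrank (ZMod 2) (LinearMap.ker (boundary G)) + G.support.ncard := by
  obtain ⟨r, hr⟩ := hne
  have hrange : LinearMap.range (boundary G) ≠ ⊤ := fun htop => by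
    obtain ⟨f, hf⟩ := LinearMap.range_eq_top.1 htop (Pi.single ⟨r, hr⟩ 1)
    have hsum := sum_boundary f
    rw [hf, Finset.sum_pi_single'] at hsum
    simp at hsum
  have hlt := Submodule.finrank_lt hrange
  have hrank := LinearMap.finrank_range_add_finrank_ker (boundary G)
  rw [Module.finrank_fintype_fun_eq_card] at hlt hrank
  rw [edgeFinset_card, ← Nat.card_coe_set_eq, Nat.card_eq_fintype_card]
  lia

end CycleSpace

section Euler

variable {V : Type*} [Fintype V] {G : SimpleGraph V}

theorem ThreeConnected.ker_boundary_le_span_faces (hT : ThreeConnected G) :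
    LinearMap.ker (boundary G) ≤ Submodule.span (ZMod 2) (edgeIndicator G '' (faces G)) := by
  refine ker_boundary_le_span_isCycleEdges.trans (Submodule.span_le.2 ?_)
  rintro _ ⟨C, hC, rfl⟩
  have hgen := hC.symmDiffClosure_isPeripheral hT
  clear hC
  induction hgen with
  | of_mem hD => exact Submodule.subset_span ⟨_, mem_faces.2 hD, rfl⟩
  | symmDiff _ _ hA hB =>
    rw [edgeIndicator_symmDiff]
    exact Submodule.add_mem _ hA hB

theorem sum_edgeIndicator_faces (hG : IsPlanar G) (hT : ThreeConnected G) :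
    ∑ F ∈ faces G, edgeIndicator G F = 0 := by
  funext e
  rw [Finset.sum_apply]
  simp only [edgeIndicator]
  rw [Finset.sum_boole, card_filter_mem_faces hG hT e.2]
  rfl

theorem finrank_span_faces_lt (hG : IsPlanar G) (hT : ThreeConnected G)
    (hne : (faces G).Nonempty) :
    Module.finrank (ZMod 2) (Submodule.span (ZMod 2) (edgeIndicator G '' (faces G))) <
      (faces G).card := by
  obtain ⟨F, hF⟩ := hne
  have hspan : Submodule.span (ZMod 2) (edgeIndicator G '' (faces G)) ≤
      Submodule.span (ZMod 2) (((faces G).erase F).image (edgeIndicator G)) := by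
    rw [Submodule.span_le]
    rintro _ ⟨D, hD, rfl⟩
    have hmem : ∀ E ∈ (faces G).erase F, edgeIndicator G E ∈
        Submodule.span (ZMod 2) (((faces G).erase F).image (edgeIndicator G)) := fun E hE =>
      Submodule.subset_span (Finset.mem_coe.2 (Finset.mem_image_of_mem _ hE))
    by_cases hDF : D = F
    · have hsum := sum_edgeIndicator_faces hG hT
      rw [← Finset.add_sum_erase _ _ hF, ← hDF] at hsum
      rw [eq_neg_of_add_eq_zero_left hsum]
      exact Submodule.neg_mem _ (Submodule.sum_mem _ (hDF ▸ hmem))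
    · exact hmem D (Finset.mem_erase.2 ⟨hDF, hD⟩)
  calc Module.finrank (ZMod 2) (Submodule.span (ZMod 2) (edgeIndicator G '' (faces G)))
      ≤ (((faces G).erase F).image (edgeIndicator G)).card :=
        (Submodule.finrank_mono hspan).trans (finrank_span_finset_le_card _)
    _ ≤ ((faces G).erase F).card := Finset.card_image_le
    _ < (faces G).card := Finset.card_erase_lt_of_mem hF

-- The half of Euler's formula that is needed: the cycle space has dimension at least
-- `|E| - |V| + 1`, and less than the number of faces.
theorem card_edgeFinset_add_two_le (hG : IsPlanar G) (hT : ThreeConnected G) :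
    G.edgeFinset.card + 2 ≤ (faces G).card + G.support.ncard := by
  have hsupp : G.support.Nonempty := by
    rw [← Set.ncard_pos]
    exact Nat.lt_of_lt_of_le (by norm_num) hT.four_le_ncard
  have hfaces : (faces G).Nonempty := by
    obtain ⟨r, t, hrt⟩ := hsupp
    have htwo := card_filter_mem_faces hG hT (mem_edgeSet G |>.2 hrt)
    exact (Finset.card_pos.1 (htwo ▸ Nat.two_pos)).mono (Finset.filter_subset _ _)
  have hker := card_edgeFinset_add_one_le hsupp
  have hspan := Submodule.finrank_mono hT.ker_boundary_le_span_faces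
  have hlt := finrank_span_faces_lt hG hT hfaces
  lia

end Euler

/-! ### Deleting triangular faces -/

section Triangles

variable {V : Type*} {G : SimpleGraph V} {F T : Finset (Sym2 V)} {a b : V} {e e' : Sym2 V}

theorem verts_eq_of_card_eq_three (hT : IsCycleEdges G T) (hcard : T.card = 3) {c : V}
    (ha : a ∈ verts T) (hb : b ∈ verts T) (hc : c ∈ verts T) (hab : a ≠ b) (hac : a ≠ c)
    (hbc : b ≠ c) : verts T = {a, b, c} := by
  symm
  refine Finset.eq_of_subset_of_card_le (by simp [Finset.insert_subset_iff, ha, hb, hc]) ?_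
  rw [← hT.card_eq, hcard, Finset.card_eq_three.2 ⟨a, b, c, hab, hac, hbc, rfl⟩]

namespace IsCycleEdges

theorem three_le_card (hT : IsCycleEdges G T) : 3 ≤ T.card := by
  obtain ⟨a, b, hab⟩ := hT.exists_mem
  obtain ⟨c, hc, hca, hcb⟩ := hT.exists_third hab
  rw [hT.card_eq,
    ← Finset.card_eq_three.2 ⟨a, b, c, (hT.adj hab).ne, hca.symm, hcb.symm, rfl⟩]
  refine Finset.card_le_card ?_
  simp [Finset.insert_subset_iff, left_mem_verts hab, right_mem_verts hab, hc]

theorem mem_of_card_eq_three (hT : IsCycleEdges G T) (hcard : T.card = 3) (ha : a ∈ verts T)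
    (hb : b ∈ verts T) (hab : a ≠ b) : s(a, b) ∈ T := by
  obtain ⟨y, z, hyz, h⟩ := hT.exists_forall_mem_iff ha
  have hay := (h y).2 (.inl rfl)
  have haz := (h z).2 (.inr rfl)
  have hverts := verts_eq_of_card_eq_three hT hcard ha (right_mem_verts hay)
    (right_mem_verts haz) (hT.adj hay).ne (hT.adj haz).ne hyz
  rw [h]
  simpa [hverts, hab.symm] using hb

theorem exists_eq_of_card_eq_three (hT : IsCycleEdges G T) (hcard : T.card = 3)
    (hab : s(a, b) ∈ T) : ∃ p ∈ verts T, p ≠ a ∧ p ≠ b ∧ T = {s(a, b), s(a, p), s(p, b)} := by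
  obtain ⟨p, hp, hpa, hpb⟩ := hT.exists_third hab
  have hne := (hT.adj hab).ne
  refine ⟨p, hp, hpa, hpb, (Finset.eq_of_subset_of_card_le ?_ ?_).symm⟩
  · simp [Finset.insert_subset_iff, hab,
      hT.mem_of_card_eq_three hcard (left_mem_verts hab) hp hpa.symm,
      hT.mem_of_card_eq_three hcard hp (right_mem_verts hab) hpb]
  · rw [hcard]
    refine (Finset.card_eq_three.2 ⟨_, _, _, ?_, ?_, ?_, rfl⟩).ge <;> grind [Sym2.eq_iff]

theorem exists_mem_mem_of_card_eq_three (hT : IsCycleEdges G T) (hcard : T.card = 3)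
    (he : e ∈ T) (he' : e' ∈ T) : ∃ c, c ∈ e ∧ c ∈ e' := by
  induction e with
  | _ a b =>
    obtain ⟨p, -, -, -, hTeq⟩ := hT.exists_eq_of_card_eq_three hcard he
    rw [hTeq] at he'
    simp only [Finset.mem_insert, Finset.mem_singleton] at he'
    rcases he' with rfl | rfl | rfl
    exacts [⟨a, by simp, by simp⟩, ⟨a, by simp, by simp⟩, ⟨b, by simp, by simp⟩]

end IsCycleEdges

namespace IsInducedCycle

theorem exists_apex (hF : IsInducedCycle G F) (hT : IsCycleEdges G T) (hcard : T.card = 3)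
    (hTF : T ≠ F) (habT : s(a, b) ∈ T) (habF : s(a, b) ∈ F) :
    ∃ p ∈ verts T, p ∉ verts F ∧ T = {s(a, b), s(a, p), s(p, b)} := by
  obtain ⟨p, hp, hpa, hpb, hTeq⟩ := hT.exists_eq_of_card_eq_three hcard habT
  refine ⟨p, hp, fun hpF => hTF (hF.eq_of_verts_subset hT ?_), hTeq⟩
  rw [verts_eq_of_card_eq_three hT hcard (left_mem_verts habT) (right_mem_verts habT) hp
    (hT.adj habT).ne hpa.symm hpb.symm]
  simp [Finset.insert_subset_iff, left_mem_verts habF, right_mem_verts habF, hpF]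

theorem eq_of_mem_triangle (hF : IsInducedCycle G F) (hT : IsCycleEdges G T)
    (hcard : T.card = 3) (hTF : T ≠ F) (heT : e ∈ T) (heF : e ∈ F) (heT' : e' ∈ T)
    (heF' : e' ∈ F) : e = e' := by
  induction e with
  | _ a b =>
    obtain ⟨p, -, hp, hTeq⟩ := hF.exists_apex hT hcard hTF heT heF
    rw [hTeq] at heT'
    simp only [Finset.mem_insert, Finset.mem_singleton] at heT'
    rcases heT' with h | rfl | rfl
    exacts [h.symm, absurd (right_mem_verts heF') hp, absurd (left_mem_verts heF') hp]

end IsInducedCycle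

end Triangles

section Rerouting

variable {V : Type*} {G : SimpleGraph V} {𝓕 𝒟 : Finset (Finset (Sym2 V))}
  {F T : Finset (Sym2 V)} {e : Sym2 V}

/-- A set of chordless cycles, given by their edge sets, such that every edge of the graph lies in
exactly two of them; the faces of a 3-connected planar graph are the example. -/
structure IsInducedCDC (G : SimpleGraph V) (𝓕 : Finset (Finset (Sym2 V))) : Prop where
  isInducedCycle : ∀ F ∈ 𝓕, IsInducedCycle G F
  card_filter_mem : ∀ e ∈ G.edgeSet, (𝓕.filter (e ∈ ·)).card = 2

/-- A set `𝒟` of triangles that can be deleted from the double cover `𝓕`, the remaining members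
being rerouted around them: the triangles are edge-disjoint, and the edges that a member of `𝓕`
shares with them pairwise meet. -/
structure IsDeletable (𝓕 𝒟 : Finset (Finset (Sym2 V))) : Prop where
  subset : 𝒟 ⊆ 𝓕
  card_eq_three : ∀ T ∈ 𝒟, T.card = 3
  eq_of_mem : ∀ T ∈ 𝒟, ∀ T' ∈ 𝒟, ∀ e ∈ T, e ∈ T' → T = T'
  exists_common : ∀ F ∈ 𝓕, ∀ T ∈ 𝒟, ∀ T' ∈ 𝒟, ∀ e ∈ T, ∀ e' ∈ T', e ∈ F → e' ∈ F →
    ∃ c, c ∈ e ∧ c ∈ e'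

theorem IsDeletable.mono {𝒟' : Finset (Finset (Sym2 V))} (h𝒟 : IsDeletable 𝓕 𝒟)
    (h : 𝒟' ⊆ 𝒟) : IsDeletable 𝓕 𝒟' where
  subset := h.trans h𝒟.subset
  card_eq_three T hT := h𝒟.card_eq_three T (h hT)
  eq_of_mem T hT T' hT' := h𝒟.eq_of_mem T (h hT) T' (h hT')
  exists_common F hF T hT T' hT' := h𝒟.exists_common F hF T (h hT) T' (h hT')

/-- The edge set `F` rerouted around the members of `𝒟` that it shares an edge with. -/
noncomputable def reroute (𝒟 : Finset (Finset (Sym2 V))) (F : Finset (Sym2 V)) :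
    Finset (Sym2 V) :=
  symmDiff F ((𝒟.filter fun T => ∃ e ∈ T, e ∈ F).biUnion id)

theorem mem_reroute_iff_of_forall_notMem (he : ∀ T ∈ 𝒟, e ∉ T) : e ∈ reroute 𝒟 F ↔ e ∈ F := by
  simp only [reroute, Finset.mem_symmDiff, Finset.mem_biUnion, Finset.mem_filter, id_eq]
  grind

theorem exists_mem_verts_of_mem_verts_reroute {z : V} (hz : z ∈ verts (reroute 𝒟 F))
    (hzF : z ∉ verts F) : ∃ T ∈ 𝒟, (∃ e ∈ T, e ∈ F) ∧ z ∈ verts T := by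
  obtain ⟨t, ht⟩ := mem_verts.1 hz
  simp only [reroute, Finset.mem_symmDiff, Finset.mem_biUnion, Finset.mem_filter, id_eq] at ht
  rcases ht with ⟨h, -⟩ | ⟨⟨T, ⟨hT, hTF⟩, h⟩, -⟩
  exacts [absurd (left_mem_verts h) hzF, ⟨T, hT, hTF, left_mem_verts h⟩]

namespace IsDeletable

theorem mem_reroute_iff (h𝒟 : IsDeletable 𝓕 𝒟) (hT : T ∈ 𝒟) (he : e ∈ T) :
    e ∈ reroute 𝒟 F ↔ e ∉ F ∧ ∃ e' ∈ T, e' ∈ F := by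
  have hmem : e ∈ (𝒟.filter fun T => ∃ e ∈ T, e ∈ F).biUnion id ↔ ∃ e' ∈ T, e' ∈ F := by
    simp only [Finset.mem_biUnion, Finset.mem_filter, id_eq]
    constructor
    · rintro ⟨T', ⟨hT', hT'F⟩, heT'⟩
      rwa [h𝒟.eq_of_mem T hT T' hT' e he heT']
    · exact fun h => ⟨T, ⟨hT, h⟩, he⟩
  rw [reroute, Finset.mem_symmDiff, hmem]
  exact ⟨fun h => h.elim (fun h => absurd ⟨e, he, h.1⟩ h.2) And.symm, fun h => .inr h.symm⟩

-- Triangles of `𝒟` with a common apex would share an edge: the edges they share with `F` meet.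
theorem eq_of_mem_verts {T' : Finset (Sym2 V)} (h𝒟 : IsDeletable 𝓕 𝒟) (h𝓕 : IsInducedCDC G 𝓕)
    (hF : F ∈ 𝓕) (hT : T ∈ 𝒟) (hT' : T' ∈ 𝒟) (hTF : ∃ e ∈ T, e ∈ F)
    (hT'F : ∃ e ∈ T', e ∈ F) {p : V} (hpF : p ∉ verts F) (hp : p ∈ verts T)
    (hp' : p ∈ verts T') : T = T' := by
  obtain ⟨e, he, heF⟩ := hTF
  obtain ⟨e', he', heF'⟩ := hT'F
  obtain ⟨c, ⟨x, rfl⟩, ⟨y, rfl⟩⟩ := h𝒟.exists_common F hF T hT T' hT' e he e' he' heF heF'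
  have hpc : p ≠ c := fun h => hpF (h ▸ left_mem_verts heF)
  have key {D : Finset (Sym2 V)} (hD : D ∈ 𝒟) (hpD : p ∈ verts D) (hcD : c ∈ verts D) :
      s(p, c) ∈ D :=
    (h𝓕.isInducedCycle D (h𝒟.subset hD)).isCycleEdges.mem_of_card_eq_three
      (h𝒟.card_eq_three D hD) hpD hcD hpc
  exact h𝒟.eq_of_mem T hT T' hT' s(p, c) (key hT hp (left_mem_verts he))
    (key hT' hp' (left_mem_verts he'))

theorem reroute_insert {a b p : V} (h𝒟 : IsDeletable 𝓕 (insert T 𝒟))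
    (hTeq : T = {s(a, b), s(a, p), s(p, b)}) (habF : s(a, b) ∈ F) (hpF : p ∉ verts F) :
    reroute (insert T 𝒟) F =
      insert s(a, p) (insert s(p, b) ((reroute 𝒟 F).erase s(a, b))) := by
  have hmemT (e : Sym2 V) : e ∈ T ↔ e = s(a, b) ∨ e = s(a, p) ∨ e = s(p, b) := by simp [hTeq]
  have hmeet : ∃ e ∈ T, e ∈ F := ⟨s(a, b), by simp [hTeq], habF⟩
  have hapF : s(a, p) ∉ F := fun h => hpF (right_mem_verts h)
  have hpbF : s(p, b) ∉ F := fun h => hpF (left_mem_verts h)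
  ext e
  by_cases he : e ∈ T
  · rw [h𝒟.mem_reroute_iff (Finset.mem_insert_self T 𝒟) he]
    rw [hmemT] at he
    grind
  · have hiff : e ∈ reroute (insert T 𝒟) F ↔ e ∈ reroute 𝒟 F := by
      simp only [reroute, Finset.filter_insert, if_pos hmeet, Finset.biUnion_insert, id_eq,
        Finset.mem_symmDiff, Finset.mem_union, he, false_or]
    rw [hiff]
    rw [hmemT] at he
    grind

theorem isCycleEdges_reroute (h𝒟 : IsDeletable 𝓕 𝒟) (h𝓕 : IsInducedCDC G 𝓕) (hF : F ∈ 𝓕)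
    (hF𝒟 : F ∉ 𝒟) : IsCycleEdges G (reroute 𝒟 F) := by
  have hind := h𝓕.isInducedCycle F hF
  induction 𝒟 using Finset.induction_on with
  | empty =>
    have hempty : reroute ∅ F = F := Finset.ext fun e => mem_reroute_iff_of_forall_notMem (by simp)
    rw [hempty]
    exact hind.isCycleEdges
  | insert T 𝒟 hT ih =>
    have h𝒟' := h𝒟.mono (Finset.subset_insert T 𝒟)
    specialize ih h𝒟' fun h => hF𝒟 (Finset.mem_insert_of_mem h)
    by_cases hmeet : ∃ e ∈ T, e ∈ F
    · have hT𝒟 := Finset.mem_insert_self T 𝒟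
      have hTcyc := (h𝓕.isInducedCycle T (h𝒟.subset hT𝒟)).isCycleEdges
      obtain ⟨⟨a, b⟩, habT, habF⟩ := hmeet
      obtain ⟨p, hp, hpF, hTeq⟩ := hind.exists_apex hTcyc (h𝒟.card_eq_three T hT𝒟)
        (fun h => hF𝒟 (h ▸ hT𝒟)) habT habF
      have hab : s(a, b) ∈ reroute 𝒟 F := by
        refine (mem_reroute_iff_of_forall_notMem fun T' hT' habT' => hT ?_).2 habF
        rwa [h𝒟.eq_of_mem T hT𝒟 T' (Finset.mem_insert_of_mem hT') _ habT habT']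
      have hpR : p ∉ verts (reroute 𝒟 F) := fun hpR => by
        obtain ⟨T', hT', hT'F, hpT'⟩ := exists_mem_verts_of_mem_verts_reroute hpR hpF
        refine hT ?_
        rwa [h𝒟.eq_of_mem_verts h𝓕 hF hT𝒟 (Finset.mem_insert_of_mem hT') ⟨_, habT, habF⟩ hT'F hpF
          hp hpT']
      rw [reroute_insert h𝒟 hTeq habF hpF]
      exact ih.detour hab hpR (hTcyc.adj (by simp [hTeq])) (hTcyc.adj (by simp [hTeq]))
    · rwa [reroute, Finset.filter_insert, if_neg hmeet]

end IsDeletable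

theorem IsInducedCDC.card_filter_ne_mem (h𝓕 : IsInducedCDC G 𝓕) (hF : F ∈ 𝓕) (he : e ∈ F) :
    (𝓕.filter fun T => T ≠ F ∧ e ∈ T).card = 1 := by
  have heq : (𝓕.filter fun T => T ≠ F ∧ e ∈ T) = (𝓕.filter (e ∈ ·)).erase F := by
    ext T
    simp only [Finset.mem_filter, Finset.mem_erase]
    tauto
  rw [heq, Finset.card_erase_of_mem (Finset.mem_filter.2 ⟨hF, he⟩),
    h𝓕.card_filter_mem e ((h𝓕.isInducedCycle F hF).isCycleEdges.mem_edgeSet he)]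

/-- A cycle double cover, given by the edge sets of its members. -/
structure IsCDCEdges (G : SimpleGraph V) (S : Multiset (Finset (Sym2 V))) : Prop where
  isCycleEdges : ∀ C ∈ S, IsCycleEdges G C
  countP_eq_two : ∀ e ∈ G.edgeSet, S.countP (e ∈ ·) = 2

namespace IsDeletable

-- The members of `𝓕` rerouted through `e` are those that share another edge with `T`.
theorem card_filter_mem_reroute_of_mem (h𝒟 : IsDeletable 𝓕 𝒟) (h𝓕 : IsInducedCDC G 𝓕)
    (hT : T ∈ 𝒟) (he : e ∈ T) : ((𝓕 \ 𝒟).filter (e ∈ reroute 𝒟 ·)).card = 2 := by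
  have hT𝓕 := h𝒟.subset hT
  have hTcyc := (h𝓕.isInducedCycle T hT𝓕).isCycleEdges
  have hcard := h𝒟.card_eq_three T hT
  have hunique {F : Finset (Sym2 V)} (hF : F ∈ 𝓕) (hFT : F ≠ T) {e e' : Sym2 V} :
      e ∈ T → e ∈ F → e' ∈ T → e' ∈ F → e = e' :=
    (h𝓕.isInducedCycle F hF).eq_of_mem_triangle hTcyc hcard hFT.symm
  have heq : (𝓕 \ 𝒟).filter (e ∈ reroute 𝒟 ·) =
      (T.erase e).biUnion fun e' => 𝓕.filter fun F => F ≠ T ∧ e' ∈ F := by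
    ext F
    simp only [Finset.mem_filter, Finset.mem_sdiff, Finset.mem_biUnion, Finset.mem_erase,
      h𝒟.mem_reroute_iff hT he]
    constructor
    · rintro ⟨⟨hF, hF𝒟⟩, heF, e', he', he'F⟩
      exact ⟨e', ⟨fun h => heF (h ▸ he'F), he'⟩, hF, fun h => hF𝒟 (h ▸ hT), he'F⟩
    · rintro ⟨e', ⟨hne, he'⟩, hF, hFT, he'F⟩
      exact ⟨⟨hF, fun hF𝒟 => hFT (h𝒟.eq_of_mem F hF𝒟 T hT e' he'F he')⟩,
        fun heF => hne (hunique hF hFT he' he'F he heF), e', he', he'F⟩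
  rw [heq, Finset.card_biUnion, Finset.sum_congr rfl fun e' he' =>
    h𝓕.card_filter_ne_mem hT𝓕 (Finset.mem_of_mem_erase he'), Finset.sum_const,
    Finset.card_erase_of_mem he, hcard, smul_eq_mul]
  intro e₁ he₁ e₂ he₂ hne
  rw [Function.onFun, Finset.disjoint_left]
  intro F hF₁ hF₂
  simp only [Finset.mem_filter, Finset.mem_coe, Finset.mem_erase] at hF₁ hF₂ he₁ he₂
  exact hne (hunique hF₁.1 hF₁.2.1 he₁.2 hF₁.2.2 he₂.2 hF₂.2.2)

theorem card_filter_mem_reroute (h𝒟 : IsDeletable 𝓕 𝒟) (h𝓕 : IsInducedCDC G 𝓕)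
    (he : e ∈ G.edgeSet) : ((𝓕 \ 𝒟).filter (e ∈ reroute 𝒟 ·)).card = 2 := by
  by_cases hT : ∃ T ∈ 𝒟, e ∈ T
  · obtain ⟨T, hT, heT⟩ := hT
    exact h𝒟.card_filter_mem_reroute_of_mem h𝓕 hT heT
  · push Not at hT
    rw [← h𝓕.card_filter_mem e he]
    congr 1
    ext F
    simp only [Finset.mem_filter, Finset.mem_sdiff, mem_reroute_iff_of_forall_notMem hT]
    exact ⟨fun h => ⟨h.1.1, h.2⟩, fun h => ⟨⟨h.1, fun hF => hT F hF h.2⟩, h.2⟩⟩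

theorem isCDCEdges_reroute (h𝒟 : IsDeletable 𝓕 𝒟) (h𝓕 : IsInducedCDC G 𝓕) :
    IsCDCEdges G ((𝓕 \ 𝒟).val.map (reroute 𝒟)) where
  isCycleEdges C hC := by
    obtain ⟨F, hF, rfl⟩ := Multiset.mem_map.1 hC
    obtain ⟨hF, hF𝒟⟩ := Finset.mem_sdiff.1 hF
    exact h𝒟.isCycleEdges_reroute h𝓕 hF hF𝒟
  countP_eq_two e he := by
    rw [Multiset.countP_map]
    exact h𝒟.card_filter_mem_reroute h𝓕 he

end IsDeletable

end Rerouting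

section Counting

variable {V : Type*} {G : SimpleGraph V} {𝓕 𝒯 : Finset (Finset (Sym2 V))}
  {b : Finset (Sym2 V) → V}

namespace IsInducedCDC

theorem sum_card [Fintype V] (h𝓕 : IsInducedCDC G 𝓕) :
    ∑ F ∈ 𝓕, F.card = 2 * G.edgeFinset.card := by
  rw [mul_comm, ← Finset.sum_card_inter (B := 𝓕) fun e he =>
    h𝓕.card_filter_mem e (mem_edgeFinset.1 he)]
  refine Finset.sum_congr rfl fun F hF => ?_
  rw [Finset.inter_eq_right.2 fun e he =>
    mem_edgeFinset.2 ((h𝓕.isInducedCycle F hF).isCycleEdges.mem_edgeSet he)]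

theorem card_biUnion_filter_ne_mem_le (h𝓕 : IsInducedCDC G 𝓕) {F E : Finset (Sym2 V)}
    (hF : F ∈ 𝓕) (hE : E ⊆ F) :
    (E.biUnion fun e => 𝓕.filter fun T => T ≠ F ∧ e ∈ T).card ≤ E.card := by
  refine Finset.card_biUnion_le.trans ?_
  rw [Finset.sum_congr rfl fun e he => h𝓕.card_filter_ne_mem hF (hE he), Finset.sum_const,
    smul_eq_mul, mul_one]

theorem exists_pairwiseDisjoint_card_le (h𝓕 : IsInducedCDC G 𝓕) (h𝒯 : 𝒯 ⊆ 𝓕)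
    (hcard : ∀ T ∈ 𝒯, T.card = 3) :
    ∃ 𝒟 ⊆ 𝒯, (𝒟 : Set (Finset (Sym2 V))).PairwiseDisjoint id ∧ 𝒯.card ≤ 4 * 𝒟.card := by
  obtain ⟨𝒟, -, h𝒟⟩ := (𝒯.powerset.filter fun 𝒟 : Finset (Finset (Sym2 V)) =>
    (𝒟 : Set (Finset (Sym2 V))).PairwiseDisjoint id).exists_le_maximal (a := ∅) (by simp)
  obtain ⟨hsub, hdisj⟩ : 𝒟 ⊆ 𝒯 ∧ (𝒟 : Set (Finset (Sym2 V))).PairwiseDisjoint id := by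
    simpa using h𝒟.prop
  refine ⟨𝒟, hsub, hdisj, ?_⟩
  have hcover : 𝒯 ⊆ 𝒟.biUnion fun D =>
      insert D (D.biUnion fun e => 𝓕.filter fun T => T ≠ D ∧ e ∈ T) := by
    intro T hT
    simp only [Finset.mem_biUnion, Finset.mem_insert, Finset.mem_filter]
    by_contra! hcon
    refine (hcon T (h𝒟.le_of_ge (y := insert T 𝒟) ?_ (Finset.subset_insert T 𝒟)
      (Finset.mem_insert_self T 𝒟))).1 rfl
    simp only [Finset.mem_filter, Finset.mem_powerset, Finset.coe_insert,
      Set.pairwiseDisjoint_insert]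
    refine ⟨Finset.insert_subset hT hsub, hdisj, fun D hD hne => ?_⟩
    exact Finset.disjoint_right.2 fun e he => (hcon D hD).2 e he (h𝒯 hT) hne
  refine (Finset.card_le_card hcover).trans ?_
  rw [mul_comm]
  refine Finset.card_biUnion_le_card_mul _ _ _ fun D hD => (Finset.card_insert_le _ _).trans ?_
  have := h𝓕.card_biUnion_filter_ne_mem_le (h𝒯 (hsub hD)) subset_rfl
  rw [hcard D (hsub hD)] at this
  lia

end IsInducedCDC

/-- Given a base vertex `b F` of each nontriangular face `F`, the triangles that may be deleted:
those whose edges in common with such an `F` are incident with `b F`. -/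
noncomputable def candidates (𝓕 : Finset (Finset (Sym2 V))) (b : Finset (Sym2 V) → V) :
    Finset (Finset (Sym2 V)) :=
  𝓕.filter fun T => T.card = 3 ∧ ∀ F ∈ 𝓕, F.card ≠ 3 → ∀ e ∈ T, e ∈ F → b F ∈ e

theorem mem_candidates {T : Finset (Sym2 V)} : T ∈ candidates 𝓕 b ↔
    T ∈ 𝓕 ∧ T.card = 3 ∧ ∀ F ∈ 𝓕, F.card ≠ 3 → ∀ e ∈ T, e ∈ F → b F ∈ e :=
  Finset.mem_filter

namespace IsInducedCDC

theorem card_filter_card_eq_three_le (h𝓕 : IsInducedCDC G 𝓕) (hb : ∀ F ∈ 𝓕, b F ∈ verts F) :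
    (𝓕.filter (·.card = 3)).card ≤
      (candidates 𝓕 b).card + ∑ F ∈ 𝓕.filter (·.card ≠ 3), (F.card - 2) := by
  have hcover : 𝓕.filter (·.card = 3) ⊆ candidates 𝓕 b ∪
      (𝓕.filter (·.card ≠ 3)).biUnion fun F =>
        (F.filter (b F ∉ ·)).biUnion fun e => 𝓕.filter fun T => T ≠ F ∧ e ∈ T := by
    intro T hT
    simp only [mem_candidates, Finset.mem_union, Finset.mem_biUnion, Finset.mem_filter] at hT ⊢
    by_contra! hcon
    obtain ⟨F, hF, hcard, e, heT, heF, hbe⟩ := hcon.1 hT.1 hT.2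
    exact hcon.2 F ⟨hF, hcard⟩ e ⟨heF, hbe⟩ hT.1 (fun h => hcard (h ▸ hT.2)) heT
  refine (Finset.card_le_card hcover).trans ((Finset.card_union_le _ _).trans ?_)
  refine Nat.add_le_add_left (Finset.card_biUnion_le.trans (Finset.sum_le_sum fun F hF => ?_)) _
  have hF𝓕 := (Finset.mem_filter.1 hF).1
  refine (h𝓕.card_biUnion_filter_ne_mem_le hF𝓕 (Finset.filter_subset _ F)).trans ?_
  have hbase := (h𝓕.isInducedCycle F hF𝓕).isCycleEdges.card_filter_mem (hb F hF𝓕)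
  have := Finset.card_filter_add_card_filter_not (s := F) (b F ∈ ·)
  lia

theorem isDeletable_of_subset_candidates (h𝓕 : IsInducedCDC G 𝓕)
    {𝒟 : Finset (Finset (Sym2 V))} (h𝒟 : 𝒟 ⊆ candidates 𝓕 b)
    (hdisj : (𝒟 : Set (Finset (Sym2 V))).PairwiseDisjoint id) : IsDeletable 𝓕 𝒟 where
  subset T hT := (mem_candidates.1 (h𝒟 hT)).1
  card_eq_three T hT := (mem_candidates.1 (h𝒟 hT)).2.1
  eq_of_mem _ hT _ hT' e he he' := hdisj.elim_finset hT hT' e he he'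
  exists_common F hF T hT T' hT' e he e' he' heF heF' := by
    by_cases hcard : F.card = 3
    · exact (h𝓕.isInducedCycle F hF).isCycleEdges.exists_mem_mem_of_card_eq_three hcard heF heF'
    · exact ⟨b F, (mem_candidates.1 (h𝒟 hT)).2.2 F hF hcard e he heF,
        (mem_candidates.1 (h𝒟 hT')).2.2 F hF hcard e' he' heF'⟩

theorem exists_isDeletable [Fintype V] [Nonempty V] (h𝓕 : IsInducedCDC G 𝓕) :
    ∃ 𝒟, IsDeletable 𝓕 𝒟 ∧ 10 * 𝓕.card ≤ 6 * G.edgeFinset.card + 4 * 𝒟.card := by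
  have hbase (F) (hF : F ∈ 𝓕) : ∃ b, b ∈ verts F := by
    obtain ⟨a, _, h⟩ := (h𝓕.isInducedCycle F hF).isCycleEdges.exists_mem
    exact ⟨a, left_mem_verts h⟩
  choose! b hb using hbase
  obtain ⟨𝒟, h𝒟, hdisj, hcand⟩ := h𝓕.exists_pairwiseDisjoint_card_le
    (𝒯 := candidates 𝓕 b) (fun T hT => (mem_candidates.1 hT).1)
    fun T hT => (mem_candidates.1 hT).2.1
  refine ⟨𝒟, h𝓕.isDeletable_of_subset_candidates h𝒟 hdisj, ?_⟩
  have htriangles := h𝓕.card_filter_card_eq_three_le hb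
  have hface : ∑ F ∈ 𝓕, (10 + if F.card ≠ 3 then F.card - 2 else 0) ≤
      ∑ F ∈ 𝓕, (3 * F.card + if F.card = 3 then 1 else 0) := by
    refine Finset.sum_le_sum fun F hF => ?_
    have := (h𝓕.isInducedCycle F hF).isCycleEdges.three_le_card
    split_ifs <;> lia
  rw [Finset.sum_add_distrib, Finset.sum_add_distrib, ← Finset.sum_filter, ← Finset.card_filter,
    ← Finset.mul_sum, h𝓕.sum_card, Finset.sum_const, smul_eq_mul] at hface
  lia

end IsInducedCDC

theorem isInducedCDC_faces [Fintype V] (hG : IsPlanar G) (hT : ThreeConnected G) :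
    IsInducedCDC G (faces G) where
  isInducedCycle _ hF := (mem_faces.1 hF).toIsInducedCycle
  card_filter_mem _ he := card_filter_mem_faces hG hT he

theorem ThreeConnected.exists_isCDCEdges [Finite V] (hG : IsPlanar G) (hT : ThreeConnected G) :
    ∃ S, IsCDCEdges G S ∧ 2 * Multiset.card S + 6 ≤ 3 * G.support.ncard := by
  have := Fintype.ofFinite V
  obtain ⟨r, -⟩ := (Set.ncard_pos (s := G.support)).1 (by have := hT.four_le_ncard; lia)
  have : Nonempty V := ⟨r⟩
  have h𝓕 := isInducedCDC_faces hG hT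
  obtain ⟨𝒟, h𝒟, hcard⟩ := h𝓕.exists_isDeletable
  refine ⟨_, h𝒟.isCDCEdges_reroute h𝓕, ?_⟩
  rw [Multiset.card_map, Finset.card_val, Finset.card_sdiff_of_subset h𝒟.subset]
  have hle := Finset.card_le_card h𝒟.subset
  have heuler := card_edgeFinset_add_two_le hG hT
  lia

end Counting

/-! ### Separations of order at most two -/

section Contraction

variable {V W : Type*} {G H : SimpleGraph V} {M : SimpleGraph W} {K S T : Set V} {x y a b z : V}

theorem HasGraphMinor.mono (hHG : H ≤ G) (h : HasGraphMinor H M) :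
    HasGraphMinor G M := by
  obtain ⟨f, hne, hconn, hdisj, hadj⟩ := h
  refine ⟨f, hne, fun w => (hconn w).mono (comap_monotone _ hHG), hdisj, fun w₁ w₂ hw => ?_⟩
  obtain ⟨a, ha, b, hb, hab⟩ := hadj hw
  exact ⟨a, ha, b, hb, hHG hab⟩

theorem IsPlanar.mono (hHG : H ≤ G) (h : IsPlanar G) : IsPlanar H :=
  ⟨fun h' => h.1 (HasGraphMinor.mono hHG h'), fun h' => h.2 (HasGraphMinor.mono hHG h')⟩

theorem ReachableIn.of_forall_adj (h : ∀ a ∈ S, ∀ b ∈ S, H.Adj a b → ReachableIn G T a b)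
    (hST : S ⊆ T) (hab : ReachableIn H S a b) : ReachableIn G T a b := by
  obtain ⟨p, hp⟩ := hab
  induction p with
  | nil => exact .refl (hST (hp _ (by simp)))
  | cons huv p ih =>
    simp only [Walk.support_cons, List.mem_cons, forall_eq_or_imp] at hp
    exact (h _ hp.1 _ (hp.2 _ p.start_mem_support) huv).trans (ih hp.2)

/-- The set `S`, to which `K` is added if `x ∈ S`; this is the branch set obtained from `S` by
contracting `K` into `x`. -/
def absorb (K : Set V) (x : V) (S : Set V) : Set V := {z | z ∈ S ∨ x ∈ S ∧ z ∈ K}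

theorem subset_absorb : S ⊆ absorb K x S := fun _ => .inl

theorem subset_absorb_of_mem (hx : x ∈ S) : K ⊆ absorb K x S := fun _ hz => .inr ⟨hx, hz⟩

theorem disjoint_absorb (hST : Disjoint S T) (hS : Disjoint K S) (hT : Disjoint K T) :
    Disjoint (absorb K x S) (absorb K x T) := by
  rw [Set.disjoint_left] at *
  rintro z (hz | ⟨hxS, hz⟩) (hz' | ⟨hxT, hz'⟩)
  exacts [hST hz hz', hS hz' hz, hT hz hz', hST hxS hxT]

theorem adj_or_eq_of_le_sup_edge (hHG : H ≤ G ⊔ edge x y) (hab : H.Adj a b) :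
    G.Adj a b ∨ a = x ∧ b = y ∨ a = y ∧ b = x := by
  have := hHG hab
  rw [sup_adj, edge_adj] at this
  tauto

theorem exists_adj_absorb (hHG : H ≤ G ⊔ edge x y) (hy : ∃ k ∈ K, G.Adj k y) (hab : H.Adj a b)
    (ha : a ∈ S) (hb : b ∈ T) :
    ∃ c ∈ absorb K x S, ∃ d ∈ absorb K x T, G.Adj c d := by
  obtain ⟨l, hl, hly⟩ := hy
  rcases adj_or_eq_of_le_sup_edge hHG hab with h | ⟨rfl, rfl⟩ | ⟨rfl, rfl⟩
  exacts [⟨a, .inl ha, b, .inl hb, h⟩, ⟨l, .inr ⟨ha, hl⟩, b, .inl hb, hly⟩,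
    ⟨a, .inl ha, l, .inr ⟨hb, hl⟩, hly.symm⟩]

theorem reachableIn_absorb_of_adj (hHG : H ≤ G ⊔ edge x y)
    (hK : (G.induce K).Connected) (hx : ∃ k ∈ K, G.Adj k x) (hy : ∃ k ∈ K, G.Adj k y)
    (ha : a ∈ S) (hb : b ∈ S) (hab : H.Adj a b) :
    ReachableIn G (absorb K x S) a b := by
  obtain ⟨k, hk, hkx⟩ := hx
  obtain ⟨l, hl, hly⟩ := hy
  have detour (hxS : x ∈ S) (hyS : y ∈ S) : ReachableIn G (absorb K x S) x y := by
    have hKS := subset_absorb_of_mem (K := K) hxS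
    exact ((reachableIn_of_adj (.inl hxS) (hKS hk) hkx.symm).trans
      ((reachableIn_of_connected hK hk hl).mono hKS)).trans
        (reachableIn_of_adj (hKS hl) (.inl hyS) hly)
  rcases adj_or_eq_of_le_sup_edge hHG hab with h | ⟨rfl, rfl⟩ | ⟨rfl, rfl⟩
  exacts [reachableIn_of_adj (.inl ha) (.inl hb) h, detour ha hb, (detour hb ha).symm]

theorem connected_induce_absorb (hHG : H ≤ G ⊔ edge x y)
    (hK : (G.induce K).Connected) (hx : ∃ k ∈ K, G.Adj k x) (hy : ∃ k ∈ K, G.Adj k y)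
    (hS : (H.induce S).Connected) :
    (G.induce (absorb K x S)).Connected := by
  have hreach {a b : V} (ha : a ∈ S) (hb : b ∈ S) : ReachableIn G (absorb K x S) a b :=
    .of_forall_adj (fun _ ha _ hb => reachableIn_absorb_of_adj hHG hK hx hy ha hb) subset_absorb
      (reachableIn_of_connected hS ha hb)
  by_cases hxS : x ∈ S
  · obtain ⟨k, hk, hkx⟩ := hx
    have hKS := subset_absorb_of_mem (K := K) hxS
    refine connected_induce_of_forall_reachableIn (subset_absorb hxS) ?_
    rintro z (hz | ⟨-, hz⟩)
    · exact hreach hxS hz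
    · exact (reachableIn_of_adj (.inl hxS) (hKS hk) hkx.symm).trans
        ((reachableIn_of_connected hK hk hz).mono hKS)
  · obtain ⟨r, hr⟩ := nonempty_of_connected hS
    refine connected_induce_of_forall_reachableIn (subset_absorb hr) ?_
    rintro z (hz | ⟨h, -⟩)
    exacts [hreach hr hz, absurd h hxS]

theorem HasGraphMinor.of_le_sup_edge (hHG : H ≤ G ⊔ edge x y)
    (hK : (G.induce K).Connected) (hx : ∃ k ∈ K, G.Adj k x) (hy : ∃ k ∈ K, G.Adj k y)
    (hKH : Disjoint K H.support) (hM : ∀ w, ∃ w', M.Adj w w') (h : HasGraphMinor H M) :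
    HasGraphMinor G M := by
  obtain ⟨f, hne, hconn, hdisj, hadj⟩ := h
  have hsupp (w : W) : Disjoint K (f w) := by
    refine Set.disjoint_left.2 fun z hzK hz => Set.disjoint_left.1 hKH hzK ?_
    obtain ⟨w', hw⟩ := hM w
    obtain ⟨a, ha, b, -, hab⟩ := hadj hw
    by_cases hza : z = a
    · exact ⟨b, hza ▸ hab⟩
    · obtain ⟨t, -, ht⟩ := (reachableIn_of_connected (hconn w) hz ha).exists_adj_of_ne hza
      exact ⟨t, ht⟩
  refine ⟨fun w => absorb K x (f w), fun w => (hne w).mono subset_absorb,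
    fun w => connected_induce_absorb hHG hK hx hy (hconn w),
    fun w₁ w₂ hw => disjoint_absorb (hdisj hw) (hsupp w₁) (hsupp w₂), fun w₁ w₂ hw => ?_⟩
  obtain ⟨a, ha, b, hb, hab⟩ := hadj hw
  exact exists_adj_absorb hHG hy hab ha hb

theorem IsPlanar.of_le_sup_edge (hHG : H ≤ G ⊔ edge x y)
    (hK : (G.induce K).Connected) (hx : ∃ k ∈ K, G.Adj k x) (hy : ∃ k ∈ K, G.Adj k y)
    (hKH : Disjoint K H.support) (h : IsPlanar G) : IsPlanar H := by
  have hminor {W : Type} {M : SimpleGraph W} (hM : ∀ w, ∃ w', M.Adj w w') :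
      HasGraphMinor H M → HasGraphMinor G M :=
    HasGraphMinor.of_le_sup_edge hHG hK hx hy hKH hM
  refine ⟨fun h' => h.1 (hminor (fun w => ⟨w + 1, by simp⟩) h'), fun h' => h.2 (hminor ?_ h')⟩
  rintro (w | w)
  exacts [⟨.inr 0, by simp⟩, ⟨.inl 0, by simp⟩]

end Contraction

section Separations

variable {V : Type*} {G : SimpleGraph V} {A B K X Z : Set V} {x y a b : V}

/-- A separation of `G`, isolated vertices being ignored, with two proper sides `A` and `B`; its
order is the number of elements of `A ∩ B`. -/
structure IsSeparation (G : SimpleGraph V) (A B : Set V) : Prop where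
  union_eq : A ∪ B = G.support
  mem_and_mem : ∀ a b, G.Adj a b → a ∈ A ∧ b ∈ A ∨ a ∈ B ∧ b ∈ B
  left : (A \ B).Nonempty
  right : (B \ A).Nonempty

namespace IsSeparation

theorem symm (h : IsSeparation G A B) : IsSeparation G B A where
  union_eq := by rw [Set.union_comm, h.union_eq]
  mem_and_mem a b hab := (h.mem_and_mem a b hab).symm
  left := h.right
  right := h.left

theorem mem_left_of_adj (h : IsSeparation G A B) (hab : G.Adj a b) (ha : a ∉ B) : b ∈ A :=
  (h.mem_and_mem a b hab).elim And.right fun h' => absurd h'.1 ha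

theorem ncard_left_lt [Finite V] (h : IsSeparation G A B) : A.ncard < G.support.ncard := by
  rw [← h.union_eq]
  obtain ⟨b, hb, hbA⟩ := h.right
  exact Set.ncard_lt_ncard ⟨Set.subset_union_left, fun hsub => hbA (hsub (.inr hb))⟩

end IsSeparation

theorem exists_isSeparation_of_forall_adj (ha : a ∈ K) (ha' : a ∈ G.support) (hb : b ∈ G.support)
    (hbK : b ∉ K) (hbX : b ∉ X) (h : ∀ u ∈ K, ∀ t, G.Adj u t → t ∈ K ∨ t ∈ X) :
    ∃ A B, IsSeparation G A B ∧ A ∩ B ⊆ X := by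
  refine ⟨G.support ∩ (K ∪ X), G.support \ K, ⟨?_, fun c d hcd => ?_, ⟨a, ?_, ?_⟩, ⟨b, ?_, ?_⟩⟩,
    ?_⟩
  · ext v
    by_cases v ∈ K <;> simp_all
  · have hc : c ∈ G.support := ⟨d, hcd⟩
    have hd : d ∈ G.support := ⟨c, hcd.symm⟩
    have hKc := fun hc => h c hc d hcd
    have hKd := fun hd => h d hd c hcd.symm
    simp only [Set.mem_inter_iff, Set.mem_union, Set.mem_sdiff]
    tauto
  all_goals grind

theorem exists_adj_notMem_of_forall_isSeparation [Finite V]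
    (hsep : ∀ A B, IsSeparation G A B → X.ncard < (A ∩ B).ncard) (ha : a ∈ K)
    (ha' : a ∈ G.support) (hb : b ∈ G.support) (hbK : b ∉ K) (hbX : b ∉ X) :
    ∃ u ∈ K, ∃ t, G.Adj u t ∧ t ∉ K ∧ t ∉ X := by
  by_contra! h
  obtain ⟨A, B, hAB, hsub⟩ := exists_isSeparation_of_forall_adj ha ha' hb hbK hbX
    fun u hu t hut => or_iff_not_imp_left.2 (h u hu t hut)
  exact (hsep A B hAB).not_ge (Set.ncard_le_ncard hsub)

theorem threeConnected_of_forall_isSeparation [Finite V]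
    (hsep : ∀ A B, IsSeparation G A B → 2 < (A ∩ B).ncard) (hcard : 4 ≤ G.support.ncard) :
    ThreeConnected G := by
  refine ⟨hcard, fun x y a ha b hb hax hay hbx hby => ?_⟩
  by_contra hab
  obtain ⟨u, hu, t, hut, ht, htX⟩ := exists_adj_notMem_of_forall_isSeparation (X := {x, y})
    (K := {z | ReachableIn G {z | z ≠ x ∧ z ≠ y} a z})
    (fun A B h => ((Set.ncard_insert_le x {y}).trans (by simp)).trans_lt (hsep A B h))
    (.refl ⟨hax, hay⟩) ha hb hab (by simp [hbx, hby])
  exact ht (hu.trans (reachableIn_of_adj hu.right_mem (by simpa using htX) hut))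

/-- Either a separation of order at most one, with `A ∩ B ⊆ {x}` and `x = y`, or a separation with
`A ∩ B = {x, y}` of order two in a graph that has no separation of smaller order. -/
structure IsTightSeparation (G : SimpleGraph V) (A B : Set V) (x y : V) : Prop
    extends IsSeparation G A B where
  inter_subset : A ∩ B ⊆ {x, y}
  one_lt_ncard : x ≠ y → ∀ A' B', IsSeparation G A' B' → 1 < (A' ∩ B').ncard

/-- The graph induced by the side `A` of a separation, with the virtual edge `xy` added if
`x ≠ y`. -/
def side (G : SimpleGraph V) (A : Set V) (x y : V) : SimpleGraph V :=
  (G.induce A).spanningCoe ⊔ edge x y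

theorem side_adj : (side G A x y).Adj a b ↔
    a ∈ A ∧ b ∈ A ∧ G.Adj a b ∨ a ≠ b ∧ s(a, b) = s(x, y) := by
  simp only [side, sup_adj, edge_adj, map_adj, comap_adj, Sym2.eq_iff]
  simp
  grind

theorem side_adj_of_adj (ha : a ∈ A) (hb : b ∈ A) (hab : G.Adj a b) : (side G A x y).Adj a b :=
  side_adj.2 (.inl ⟨ha, hb, hab⟩)

theorem side_le_sup_edge : side G A x y ≤ G ⊔ edge x y :=
  sup_le_sup_right (G.spanningCoe_induce_le A) _

theorem exists_isTightSeparation [Finite V]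
    (h : ∃ A B, IsSeparation G A B ∧ (A ∩ B).ncard ≤ 2) :
    ∃ A B x y, IsTightSeparation G A B x y := by
  by_cases h1 : ∃ A B, IsSeparation G A B ∧ (A ∩ B).ncard ≤ 1
  · obtain ⟨A, B, hAB, hcard⟩ := h1
    have : Nonempty V := ⟨hAB.left.some⟩
    obtain ⟨x, hx⟩ := (Set.ncard_le_one_iff_subset_singleton (s := A ∩ B)).1 hcard
    exact ⟨A, B, x, x, hAB, by simpa using hx, fun h => absurd rfl h⟩
  · push Not at h1
    obtain ⟨A, B, hAB, hcard⟩ := h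
    obtain ⟨x, y, -, hxy⟩ := Set.ncard_eq_two.1 (hcard.antisymm (h1 A B hAB))
    exact ⟨A, B, x, y, hAB, hxy.subset, fun _ => h1⟩

namespace IsTightSeparation

theorem symm (h : IsTightSeparation G A B x y) : IsTightSeparation G B A x y where
  toIsSeparation := h.toIsSeparation.symm
  inter_subset := Set.inter_comm A B ▸ h.inter_subset
  one_lt_ncard := h.one_lt_ncard

variable [Finite V]

theorem inter_eq (h : IsTightSeparation G A B x y) (hxy : x ≠ y) : A ∩ B = {x, y} :=
  Set.eq_of_subset_of_ncard_le h.inter_subset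
    (by rw [Set.ncard_pair hxy]; exact h.one_lt_ncard hxy A B h.toIsSeparation)

theorem mem_inter_left (h : IsTightSeparation G A B x y) (hxy : x ≠ y) : x ∈ A ∩ B := by
  simp [h.inter_eq hxy]

theorem mem_inter_right (h : IsTightSeparation G A B x y) (hxy : x ≠ y) : y ∈ A ∩ B := by
  simp [h.inter_eq hxy]

theorem mem_of_side_adj (h : IsTightSeparation G A B x y) (hab : (side G A x y).Adj a b) :
    a ∈ A := by
  rcases side_adj.1 hab with ⟨ha, -, -⟩ | ⟨hne, heq⟩
  · exact ha
  · rw [Sym2.eq_iff] at heq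
    rcases heq with ⟨rfl, rfl⟩ | ⟨rfl, rfl⟩
    exacts [(h.mem_inter_left hne).1, (h.mem_inter_right hne.symm).1]

theorem support_side_subset (h : IsTightSeparation G A B x y) : (side G A x y).support ⊆ A := by
  rintro a ⟨b, hab⟩
  exact h.mem_of_side_adj hab

theorem ncard_support_side_lt (h : IsTightSeparation G A B x y) :
    (side G A x y).support.ncard < G.support.ncard :=
  (Set.ncard_le_ncard h.support_side_subset).trans_lt h.ncard_left_lt

theorem ncard_support_side_add_le (h : IsTightSeparation G A B x y) :
    (side G A x y).support.ncard + (side G B x y).support.ncard ≤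
      G.support.ncard + ({x, y} : Set V).ncard := by
  have hA := Set.ncard_le_ncard h.support_side_subset
  have hB := Set.ncard_le_ncard h.symm.support_side_subset
  have hcard := Set.ncard_union_add_ncard_inter A B
  have hinter := Set.ncard_le_ncard h.inter_subset
  rw [h.union_eq] at hcard
  lia

end IsTightSeparation

theorem IsSeparation.support_side_nonempty (h : IsSeparation G A B) :
    (side G A x y).support.Nonempty := by
  obtain ⟨a, ha, haB⟩ := h.left
  obtain ⟨t, hat⟩ : a ∈ G.support := h.union_eq ▸ .inl ha
  exact ⟨a, t, side_adj_of_adj ha (h.mem_left_of_adj hat haB) hat⟩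

end Separations

section Planarity

variable {V : Type*} [Finite V] {G : SimpleGraph V} {A B : Set V} {x y b : V}

theorem exists_mem_component_adj
    (hsep : ∀ A B, IsSeparation G A B → 1 < (A ∩ B).ncard) (hx : x ∈ G.support) (hxy : x ≠ y)
    (hb : b ∈ G.support) (hbx : b ≠ x) (hby : b ≠ y) :
    ∃ k ∈ {z | ReachableIn G {x, y}ᶜ b z}, G.Adj k x := by
  obtain ⟨u, hu, t, hut, ht, hty⟩ := exists_adj_notMem_of_forall_isSeparation (X := {y})
    (K := {z | ReachableIn G {x, y}ᶜ b z}) (fun A B h => by simpa using hsep A B h)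
    (.refl (by simp [hbx, hby])) hb hx (fun h => h.right_mem (.inl rfl)) hxy
  obtain rfl : t = x := by
    by_contra htx
    exact ht (hu.trans (reachableIn_of_adj hu.right_mem (by simp_all) hut))
  exact ⟨u, hu, hut⟩

theorem IsTightSeparation.isPlanar_side (h : IsTightSeparation G A B x y) (hG : IsPlanar G) :
    IsPlanar (side G A x y) := by
  by_cases hxy : x = y
  · refine IsPlanar.mono ?_ hG
    simpa [hxy] using side_le_sup_edge (G := G) (A := A) (x := x) (y := y)
  have hsep := h.one_lt_ncard hxy
  have hx := h.mem_inter_left hxy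
  have hy := h.mem_inter_right hxy
  have hsupp {v : V} (hv : v ∈ B) : v ∈ G.support := h.union_eq ▸ .inr hv
  obtain ⟨b, hb, hbA⟩ := h.right
  have hbx : b ≠ x := fun hbx => hbA (hbx ▸ hx.1)
  have hby : b ≠ y := fun hby => hbA (hby ▸ hy.1)
  have hK (k : V) (hk : ReachableIn G {x, y}ᶜ b k) : k ∉ A := fun hkA => by
    obtain ⟨c, d, hc, hcd, hdA, hd⟩ := hk.exists_adj_mem_of_notMem A hbA hkA
    exact hd (h.inter_subset ⟨hdA, h.symm.mem_left_of_adj hcd hc.right_mem.2⟩)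
  refine IsPlanar.of_le_sup_edge side_le_sup_edge
    (connected_induce_setOf_reachableIn (S := {x, y}ᶜ) (a := b) (by simp [hbx, hby]))
    (exists_mem_component_adj hsep (hsupp hx.2) hxy (hsupp hb) hbx hby) ?_
    (Set.disjoint_left.2 fun k hk hk' => hK k hk (h.support_side_subset hk')) hG
  rw [Set.pair_comm]
  exact exists_mem_component_adj hsep (hsupp hy.2) (Ne.symm hxy) (hsupp hb) hby hbx

end Planarity

section Bridgeless

variable {V : Type*} {G : SimpleGraph V} {A B Z : Set V} {x y a b p q : V}

/-- Bridgelessness in terms of cuts: no cut consists of a single edge. -/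
def Bridgeless (G : SimpleGraph V) : Prop :=
  ∀ (Z : Set V) (a b : V), a ∈ Z → b ∉ Z → G.Adj a b →
    ∃ c ∈ Z, ∃ d ∉ Z, G.Adj c d ∧ s(c, d) ≠ s(a, b)

theorem bridgeless_of_forall_not_isBridge (h : ∀ e ∈ G.edgeSet, ¬ G.IsBridge e) :
    Bridgeless G := by
  intro Z a b ha hb hab
  have hab' := h s(a, b) hab
  rw [isBridge_iff, not_not] at hab'
  obtain ⟨p⟩ := hab'
  obtain ⟨d, -, hd₁, hd₂⟩ := p.exists_boundary_dart Z ha hb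
  have hd := d.adj
  rw [deleteEdges_adj] at hd
  exact ⟨d.fst, hd₁, d.snd, hd₂, hd.1, hd.2⟩

theorem Bridgeless.exists_adj_ne (hG : Bridgeless G) (hab : G.Adj a b) :
    ∃ c, c ≠ b ∧ G.Adj a c := by
  obtain ⟨_, rfl, d, -, hcd, hne⟩ := hG {a} a b rfl hab.ne.symm hab
  exact ⟨d, fun h => hne (by rw [h]), hcd⟩

theorem Bridgeless.exists_side_adj_ne_of_disjoint [Finite V] (hG : Bridgeless G)
    (h : IsTightSeparation G A B x y) (hZ : Disjoint Z (A ∩ B)) (ha : a ∈ Z) (hb : b ∉ Z)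
    (hab : (side G A x y).Adj a b) :
    ∃ c ∈ Z, ∃ d ∉ Z, (side G A x y).Adj c d ∧ s(c, d) ≠ s(a, b) := by
  rw [Set.disjoint_left] at hZ
  have hadj : G.Adj a b := by
    rcases side_adj.1 hab with ⟨-, -, hab⟩ | ⟨hne, heq⟩
    · exact hab
    · rw [Sym2.eq_iff] at heq
      rcases heq with ⟨rfl, rfl⟩ | ⟨rfl, rfl⟩
      exacts [absurd (h.mem_inter_left hne) (hZ ha), absurd (h.mem_inter_right hne.symm) (hZ ha)]
  obtain ⟨c, ⟨hcZ, hcA⟩, d, hd, hcd, hne⟩ :=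
    hG (Z ∩ A) a b ⟨ha, h.mem_of_side_adj hab⟩ (fun h => hb h.1) hadj
  have hdA := h.mem_left_of_adj hcd fun hcB => hZ hcZ ⟨hcA, hcB⟩
  exact ⟨c, hcZ, d, fun hdZ => hd ⟨hdZ, hdA⟩, side_adj_of_adj hcA hdA hcd, hne⟩

-- Otherwise deleting `p` would separate the part of `A` in `Z` from `q`.
theorem exists_adj_of_inter_eq_pair [Finite V] (h : IsSeparation G A B)
    (hsep : ∀ A B, IsSeparation G A B → 1 < (A ∩ B).ncard) (hAB : A ∩ B = {p, q}) (hq : q ∉ Z)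
    (ha : a ∈ A \ B) (haZ : a ∈ Z) :
    ∃ c ∈ Z, ∃ d ∉ Z, c ∈ A ∧ d ∈ A ∧ G.Adj c d ∧ c ≠ p := by
  have hqAB : q ∈ A ∩ B := hAB ▸ .inr rfl
  have hap : a ≠ p := fun hap => ha.2 (hap ▸ (hAB ▸ .inl rfl : p ∈ A ∩ B).2)
  have hsupp {v : V} (hv : v ∈ A) : v ∈ G.support := h.union_eq ▸ .inl hv
  by_cases hqp : q = p
  · exact absurd (hsep A B h) (by simp [hAB, hqp])
  obtain ⟨c, ⟨⟨hcA, hcZ⟩, hcp⟩, d, hcd, hd, hdp⟩ :=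
    exists_adj_notMem_of_forall_isSeparation (X := {p}) (K := (A ∩ Z) \ {p})
      (fun A B h => by simpa using hsep A B h) ⟨⟨ha.1, haZ⟩, hap⟩ (hsupp ha.1) (hsupp hqAB.1)
      (fun h => hq h.1.2) hqp
  have hcB : c ∉ B := fun hcB => by
    rcases (hAB ▸ ⟨hcA, hcB⟩ : c ∈ ({p, q} : Set V)) with rfl | rfl
    exacts [hcp rfl, hq hcZ]
  have hdA := h.mem_left_of_adj hcd hcB
  exact ⟨c, hcZ, d, fun hdZ => hd ⟨⟨hdA, hdZ⟩, hdp⟩, hcA, hdA, hcd, hcp⟩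

theorem IsTightSeparation.bridgeless_side [Finite V] (h : IsTightSeparation G A B x y)
    (hG : Bridgeless G) : Bridgeless (side G A x y) := by
  intro Z a b ha hb hab
  by_cases hZ : Disjoint Z (A ∩ B)
  · exact hG.exists_side_adj_ne_of_disjoint h hZ ha hb hab
  by_cases hZ' : Disjoint Zᶜ (A ∩ B)
  · obtain ⟨c, hc, d, hd, hcd, hne⟩ :=
      hG.exists_side_adj_ne_of_disjoint h hZ' hb (not_not.2 ha) hab.symm
    exact ⟨d, not_not.1 hd, c, hc, hcd.symm, by rwa [Sym2.eq_swap, Sym2.eq_swap (a := a)]⟩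
  obtain ⟨p, hpZ, hp⟩ := Set.not_disjoint_iff.1 hZ
  obtain ⟨q, hqZ, hq⟩ := Set.not_disjoint_iff.1 hZ'
  have hpq : p ≠ q := fun hpq => hqZ (hpq ▸ hpZ)
  have hpqxy : s(p, q) = s(x, y) := by
    have hp' := h.inter_subset hp
    have hq' := h.inter_subset hq
    grind [Sym2.eq_iff]
  have hpqadj : (side G A x y).Adj p q := side_adj.2 (.inr ⟨hpq, hpqxy⟩)
  by_cases hs : s(a, b) = s(p, q)
  swap
  · exact ⟨p, hpZ, q, hqZ, hpqadj, Ne.symm hs⟩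
  obtain ⟨rfl, rfl⟩ : a = p ∧ b = q := by grind [Sym2.eq_iff]
  have hxy : x ≠ y := by grind [Sym2.eq_iff]
  have hAB : A ∩ B = {a, b} := by grind [h.inter_eq hxy, Sym2.eq_iff]
  obtain ⟨t, ht⟩ := h.left
  by_cases htZ : t ∈ Z
  · obtain ⟨c, hc, d, hd, hcA, hdA, hcd, hca⟩ := exists_adj_of_inter_eq_pair h.toIsSeparation
      (h.one_lt_ncard hxy) hAB hb ht htZ
    exact ⟨c, hc, d, hd, side_adj_of_adj hcA hdA hcd, by grind [Sym2.eq_iff]⟩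
  · obtain ⟨d, hd, c, hc, hdA, hcA, hdc, hdb⟩ := exists_adj_of_inter_eq_pair (Z := Zᶜ)
      h.toIsSeparation (h.one_lt_ncard hxy) (Set.pair_comm a b ▸ hAB) (not_not.2 ha) ht htZ
    exact ⟨c, not_not.1 hc, d, hd, side_adj_of_adj hcA hdA hdc.symm, by grind [Sym2.eq_iff]⟩

end Bridgeless

section Gluing

variable {V : Type*} {G : SimpleGraph V} {A B : Set V} {x y z : V} {e f : Sym2 V}
  {C C' D D' : Finset (Sym2 V)} {S S' T : Multiset (Finset (Sym2 V))}

theorem exists_eq_cons_cons_of_countP_eq_two (h : S.countP (e ∈ ·) = 2) :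
    ∃ C D T, S = C ::ₘ D ::ₘ T ∧ e ∈ C ∧ e ∈ D := by
  obtain ⟨C, hC, heC⟩ := Multiset.countP_pos.1 (by lia : 0 < S.countP (e ∈ ·))
  obtain ⟨S₁, rfl⟩ := Multiset.exists_cons_of_mem hC
  rw [Multiset.countP_cons_of_pos (p := fun F => e ∈ F) _ heC] at h
  obtain ⟨D, hD, heD⟩ := Multiset.countP_pos.1 (by lia : 0 < S₁.countP (e ∈ ·))
  obtain ⟨T, rfl⟩ := Multiset.exists_cons_of_mem hD
  exact ⟨C, D, T, rfl, heC, heD⟩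

theorem countP_cons_erase_union_erase (hne : e ≠ f) (h : e ∈ C → e ∉ D) :
    ((C.erase f ∪ D.erase f) ::ₘ S).countP (e ∈ ·) = (C ::ₘ D ::ₘ S).countP (e ∈ ·) := by
  simp only [Multiset.countP_cons, Finset.mem_union, Finset.mem_erase, ne_eq, hne,
    not_false_eq_true, true_and]
  grind

theorem mem_edgeSet_of_mem_sup_edge (he : e ∈ (G ⊔ edge x y).edgeSet) (hne : e ≠ s(x, y)) :
    e ∈ G.edgeSet := by
  simp_all [edgeSet_sup]

theorem IsCycleEdges.eq_of_mem_of_mem (hC : IsCycleEdges G C)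
    (h : ∀ z ∈ verts C, z ∈ verts D → z = x ∨ z = y) (heC : e ∈ C) (heD : e ∈ D) :
    e = s(x, y) := by
  induction e with
  | _ a b =>
    have ha := h a (left_mem_verts heC) (left_mem_verts heD)
    have hb := h b (right_mem_verts heC) (right_mem_verts heD)
    have hab := (hC.adj heC).ne
    grind [Sym2.eq_iff]

namespace IsCDCEdges

theorem countP_eq_zero (hS : IsCDCEdges G S) (he : e ∉ G.edgeSet) : S.countP (e ∈ ·) = 0 :=
  Multiset.countP_eq_zero.2 fun C hC heC => he ((hS.isCycleEdges C hC).mem_edgeSet heC)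

theorem notMem_of_cons_cons (hS : IsCDCEdges G (C ::ₘ D ::ₘ S)) (hC : e ∈ C) (hD : e ∈ D) :
    ∀ F ∈ S, e ∉ F := by
  have he := hS.countP_eq_two e ((hS.isCycleEdges C (by simp)).mem_edgeSet hC)
  rw [Multiset.countP_cons_of_pos (p := fun F => e ∈ F) _ hC,
    Multiset.countP_cons_of_pos (p := fun F => e ∈ F) _ hD] at he
  exact Multiset.countP_eq_zero.1 (by lia)

theorem of_sup_edge (hS : IsCDCEdges (G ⊔ edge x y) (C ::ₘ D ::ₘ S)) (hxy : ¬ G.Adj x y)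
    (hC : s(x, y) ∈ C) (hD : s(x, y) ∈ D) (h : ∀ z ∈ verts C, z ∈ verts D → z = x ∨ z = y) :
    IsCDCEdges G ((C.erase s(x, y) ∪ D.erase s(x, y)) ::ₘ S) where
  isCycleEdges F hF := by
    have hCcyc := hS.isCycleEdges C (by simp)
    have hDcyc := hS.isCycleEdges D (by simp)
    have transfer {F : Finset (Sym2 V)} (hF : IsCycleEdges (G ⊔ edge x y) F)
        (hxyF : s(x, y) ∉ F) : IsCycleEdges G F :=
      hF.transfer fun e he => mem_edgeSet_of_mem_sup_edge (hF.mem_edgeSet he)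
        fun heq => hxyF (heq ▸ he)
    rcases Multiset.mem_cons.1 hF with rfl | hF
    · exact transfer (hCcyc.merge hDcyc hC hD h) (by simp)
    · exact transfer (hS.isCycleEdges F (by simp [hF])) (hS.notMem_of_cons_cons hC hD F hF)
  countP_eq_two e he := by
    have hne : e ≠ s(x, y) := fun heq => hxy (by rwa [heq] at he)
    rw [countP_cons_erase_union_erase hne fun heC heD =>
      hne ((hS.isCycleEdges C (by simp)).eq_of_mem_of_mem h heC heD)]
    exact hS.countP_eq_two e (edgeSet_mono le_sup_left he)

theorem isCycleEdges_of_mem_add (hS : IsCDCEdges (side G A x y) S)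
    (hS' : IsCDCEdges (side G B x y) S') :
    ∀ F ∈ S + S', IsCycleEdges (G ⊔ edge x y) F := by
  intro F hF
  rcases Multiset.mem_add.1 hF with hF | hF
  · have hFcyc := hS.isCycleEdges F hF
    exact hFcyc.transfer fun e he => edgeSet_mono side_le_sup_edge (hFcyc.mem_edgeSet he)
  · have hFcyc := hS'.isCycleEdges F hF
    exact hFcyc.transfer fun e he => edgeSet_mono side_le_sup_edge (hFcyc.mem_edgeSet he)

end IsCDCEdges

namespace IsTightSeparation

variable [Finite V]

theorem eq_of_mem_edgeSet_side (h : IsTightSeparation G A B x y)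
    (hA : e ∈ (side G A x y).edgeSet) (hB : e ∈ (side G B x y).edgeSet) : e = s(x, y) := by
  induction e with
  | _ a b =>
    rw [mem_edgeSet] at hA hB
    have ha := h.inter_subset ⟨h.mem_of_side_adj hA, h.symm.mem_of_side_adj hB⟩
    have hb := h.inter_subset ⟨h.mem_of_side_adj hA.symm, h.symm.mem_of_side_adj hB.symm⟩
    have hab := hA.ne
    grind [Sym2.eq_iff]

theorem mem_of_mem_verts (h : IsTightSeparation G A B x y) (hC : IsCycleEdges (side G A x y) C)
    (hz : z ∈ verts C) : z ∈ A := by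
  obtain ⟨t, ht⟩ := mem_verts.1 hz
  exact h.mem_of_side_adj (hC.adj ht)

theorem eq_or_eq_of_mem_verts (h : IsTightSeparation G A B x y)
    (hC : IsCycleEdges (side G A x y) C) (hD : IsCycleEdges (side G B x y) D) :
    ∀ z ∈ verts C, z ∈ verts D → z = x ∨ z = y :=
  fun _ hzC hzD => h.inter_subset ⟨h.mem_of_mem_verts hC hzC, h.symm.mem_of_mem_verts hD hzD⟩

theorem countP_add_eq_two (h : IsTightSeparation G A B x y) (hS : IsCDCEdges (side G A x y) S)
    (hS' : IsCDCEdges (side G B x y) S') (he : e ∈ G.edgeSet) (hne : e ≠ s(x, y)) :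
    (S + S').countP (e ∈ ·) = 2 := by
  have hor : e ∈ (side G A x y).edgeSet ∨ e ∈ (side G B x y).edgeSet := by
    induction e with
    | _ a b =>
      exact (h.mem_and_mem a b he).imp (fun hab => side_adj_of_adj hab.1 hab.2 he)
        fun hab => side_adj_of_adj hab.1 hab.2 he
  rw [Multiset.countP_add]
  rcases hor with hA | hB
  · rw [hS.countP_eq_two e hA,
      hS'.countP_eq_zero fun hB => hne (h.eq_of_mem_edgeSet_side hA hB)]
  · rw [hS'.countP_eq_two e hB,
      hS.countP_eq_zero fun hA => hne (h.eq_of_mem_edgeSet_side hA hB)]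

theorem isCDCEdges_add (h : IsTightSeparation G A B x x) (hS : IsCDCEdges (side G A x x) S)
    (hS' : IsCDCEdges (side G B x x) S') : IsCDCEdges G (S + S') where
  isCycleEdges := by simpa using hS.isCycleEdges_of_mem_add hS'
  countP_eq_two e he := h.countP_add_eq_two hS hS' he fun heq => by
    simp [heq] at he

theorem isCDCEdges_sup_edge (h : IsTightSeparation G A B x y)
    (hS : IsCDCEdges (side G A x y) (C ::ₘ C' ::ₘ S))
    (hS' : IsCDCEdges (side G B x y) (D ::ₘ D' ::ₘ S')) (hC : s(x, y) ∈ C) (hC' : s(x, y) ∈ C')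
    (hD : s(x, y) ∈ D) (hD' : s(x, y) ∈ D') :
    IsCDCEdges (G ⊔ edge x y)
      (C' ::ₘ D' ::ₘ (C.erase s(x, y) ∪ D.erase s(x, y)) ::ₘ (S + S')) := by
  have hcyc := hS.isCycleEdges_of_mem_add hS'
  have hverts := h.eq_or_eq_of_mem_verts (hS.isCycleEdges C (by simp))
    (hS'.isCycleEdges D (by simp))
  refine ⟨fun F hF => ?_, fun e he => ?_⟩
  · simp only [Multiset.mem_cons] at hF
    rcases hF with rfl | rfl | rfl | hF
    · exact hcyc _ (by simp)
    · exact hcyc _ (by simp)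
    · exact (hcyc C (by simp)).merge (hcyc D (by simp)) hC hD hverts
    · exact hcyc F (by simp only [Multiset.mem_add, Multiset.mem_cons] at hF ⊢; tauto)
  · by_cases hne : e = s(x, y)
    · have hT := Multiset.countP_eq_zero.2 (hS.notMem_of_cons_cons hC hC')
      have hT' := Multiset.countP_eq_zero.2 (hS'.notMem_of_cons_cons hD hD')
      simp [hne, hC', hD', hT, hT']
    · have hcount := h.countP_add_eq_two hS hS' (mem_edgeSet_of_mem_sup_edge he hne) hne
      have hmerge := countP_cons_erase_union_erase (S := S + S') hne fun heC heD =>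
        hne ((hcyc C (by simp)).eq_of_mem_of_mem hverts heC heD)
      simp only [Multiset.countP_add, Multiset.countP_cons] at hcount hmerge ⊢
      lia

theorem exists_isCDCEdges_of_ne (h : IsTightSeparation G A B x y) (hxy : x ≠ y)
    (hS : IsCDCEdges (side G A x y) S) (hS' : IsCDCEdges (side G B x y) S') :
    ∃ T, IsCDCEdges G T ∧ Multiset.card T + 1 ≤ Multiset.card S + Multiset.card S' := by
  have hedge {A : Set V} : s(x, y) ∈ (side G A x y).edgeSet := side_adj.2 (.inr ⟨hxy, rfl⟩)
  obtain ⟨C, C', T, rfl, hC, hC'⟩ :=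
    exists_eq_cons_cons_of_countP_eq_two (hS.countP_eq_two s(x, y) hedge)
  obtain ⟨D, D', T', rfl, hD, hD'⟩ :=
    exists_eq_cons_cons_of_countP_eq_two (hS'.countP_eq_two s(x, y) hedge)
  have hmerged := h.isCDCEdges_sup_edge hS hS' hC hC' hD hD'
  by_cases hadj : G.Adj x y
  · rw [sup_eq_left.2 ((edge_le_iff G).2 (.inr hadj))] at hmerged
    exact ⟨_, hmerged, by simp only [Multiset.card_cons, Multiset.card_add]; lia⟩
  · have hverts := h.eq_or_eq_of_mem_verts (hS.isCycleEdges C' (by simp))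
      (hS'.isCycleEdges D' (by simp))
    exact ⟨_, hmerged.of_sup_edge hadj hC' hD' hverts,
      by simp only [Multiset.card_cons, Multiset.card_add]; lia⟩

theorem exists_isCDCEdges (h : IsTightSeparation G A B x y)
    (hA : ∃ S, IsCDCEdges (side G A x y) S ∧
      2 * Multiset.card S + 5 ≤ 3 * (side G A x y).support.ncard)
    (hB : ∃ S, IsCDCEdges (side G B x y) S ∧
      2 * Multiset.card S + 5 ≤ 3 * (side G B x y).support.ncard) :
    ∃ S, IsCDCEdges G S ∧ 2 * Multiset.card S + 5 ≤ 3 * G.support.ncard := by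
  obtain ⟨S, hS, hcard⟩ := hA
  obtain ⟨S', hS', hcard'⟩ := hB
  have hncard := h.ncard_support_side_add_le
  by_cases hxy : x = y
  · subst hxy
    simp only [Set.mem_singleton_iff, Set.insert_eq_of_mem, Set.ncard_singleton] at hncard
    exact ⟨S + S', h.isCDCEdges_add hS hS', by rw [Multiset.card_add]; lia⟩
  · rw [Set.ncard_pair hxy] at hncard
    obtain ⟨T, hT, hcardT⟩ := h.exists_isCDCEdges_of_ne hxy hS hS'
    exact ⟨T, hT, by lia⟩

end IsTightSeparation

end Gluing

section Induction

variable {V : Type*} {G : SimpleGraph V} {a b c : V}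

theorem Bridgeless.adj_of_support_eq (hG : Bridgeless G) (h : G.support = {a, b, c}) :
    G.Adj a b := by
  have hmem {u v : V} (huv : G.Adj u v) : v = a ∨ v = b ∨ v = c := by
    simpa [h] using G.mem_support.2 ⟨u, huv.symm⟩
  obtain ⟨t, hat⟩ : a ∈ G.support := h ▸ .inl rfl
  obtain ⟨t', htt', hat'⟩ := hG.exists_adj_ne hat
  have ht := hmem hat
  have ht' := hmem hat'
  have hne := hat.ne
  have hne' := hat'.ne
  grind

theorem Bridgeless.exists_isCDCEdges_of_ncard_eq_three (hG : Bridgeless G)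
    (h : G.support.ncard = 3) : ∃ S, IsCDCEdges G S ∧ Multiset.card S = 2 := by
  obtain ⟨a, b, c, hab, hac, hbc, hsupp⟩ := Set.ncard_eq_three.1 h
  have hadj := hG.adj_of_support_eq hsupp
  have hadjbc : G.Adj b c := hG.adj_of_support_eq (c := a) (by grind)
  have hadjca : G.Adj c a := hG.adj_of_support_eq (c := b) (by grind)
  have hC : IsCycleEdges G {s(a, b), s(b, c), s(c, a)} := by
    simpa using IsCycleEdges.of_isPath hadj
      (p := .cons hadjbc (.cons hadjca .nil)) (by simp [hbc, hab.symm, hac.symm])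
      (by simp [hab, hac, hbc])
  refine ⟨Multiset.replicate 2 {s(a, b), s(b, c), s(c, a)}, ⟨fun C hC' => ?_, fun e he => ?_⟩,
    Multiset.card_replicate _ _⟩
  · rwa [Multiset.eq_of_mem_replicate hC']
  · have hmem : e ∈ ({s(a, b), s(b, c), s(c, a)} : Finset (Sym2 V)) := by
      induction e with
      | _ u v =>
        have hu : u ∈ G.support := ⟨v, he⟩
        have hv : v ∈ G.support := ⟨u, he.symm⟩
        have huv := G.ne_of_adj he
        simp only [hsupp, Set.mem_insert_iff, Set.mem_singleton_iff] at hu hv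
        simp only [Finset.mem_insert, Finset.mem_singleton, Sym2.eq_iff]
        grind
    rw [Multiset.countP_eq_card.2, Multiset.card_replicate]
    intro C hC'
    rwa [Multiset.eq_of_mem_replicate hC']

theorem Bridgeless.three_le_ncard_support [Finite V] (hG : Bridgeless G)
    (hne : G.support.Nonempty) : 3 ≤ G.support.ncard := by
  obtain ⟨a, b, hab⟩ := hne
  obtain ⟨c, hcb, hac⟩ := hG.exists_adj_ne hab
  have hsub : {a, b, c} ⊆ G.support := by
    rintro _ (rfl | rfl | rfl)
    exacts [⟨b, hab⟩, ⟨a, hab.symm⟩, ⟨a, hac.symm⟩]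
  exact (Set.ncard_eq_three.2 ⟨a, b, c, hab.ne, hac.ne, hcb.symm, rfl⟩).symm.trans_le
    (Set.ncard_le_ncard hsub)

theorem exists_isCDCEdges_of_isPlanar [Finite V] (hG : IsPlanar G) (hB : Bridgeless G)
    (hne : G.support.Nonempty) :
    ∃ S, IsCDCEdges G S ∧ 2 * Multiset.card S + 5 ≤ 3 * G.support.ncard := by
  induction hn : G.support.ncard using Nat.strong_induction_on generalizing G with
  | _ n ih =>
    subst hn
    by_cases hsep : ∃ A B, IsSeparation G A B ∧ (A ∩ B).ncard ≤ 2
    · obtain ⟨A, B, x, y, h⟩ := exists_isTightSeparation hsep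
      have ih_side {A B : Set V} (h : IsTightSeparation G A B x y) :=
        ih _ h.ncard_support_side_lt (h.isPlanar_side hG) (h.bridgeless_side hB)
          h.toIsSeparation.support_side_nonempty rfl
      exact h.exists_isCDCEdges (ih_side h) (ih_side h.symm)
    · push Not at hsep
      rcases (hB.three_le_ncard_support hne).eq_or_lt' with h3 | h4
      · obtain ⟨S, hS, hcard⟩ := hB.exists_isCDCEdges_of_ncard_eq_three h3
        exact ⟨S, hS, by lia⟩
      · obtain ⟨S, hS, hcard⟩ :=
          (threeConnected_of_forall_isSeparation hsep h4).exists_isCDCEdges hG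
        exact ⟨S, hS, by lia⟩

end Induction

section Subgraphs

variable {V : Type*} {G : SimpleGraph V} {C : Finset (Sym2 V)} {S : Multiset (Finset (Sym2 V))}

theorem IsCycleEdges.exists_isCycleSubgraph (hC : IsCycleEdges G C) :
    ∃ H : G.Subgraph, IsCycleSubgraph H ∧ ∀ e, e ∈ H.edgeSet ↔ e ∈ C := by
  obtain ⟨u, c, hc, rfl⟩ := hC
  exact ⟨c.toSubgraph, ⟨c.toSubgraph_connected.coe, fun v hv =>
    hc.ncard_neighborSet_toSubgraph_eq_two (by simpa using hv)⟩, fun e => by simp⟩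

theorem IsCDCEdges.exists_isCDC (hS : IsCDCEdges G S) :
    ∃ S' : Multiset G.Subgraph, IsCDC G S' ∧ Multiset.card S' = Multiset.card S := by
  choose! f hf hmem using fun C hC => (hS.isCycleEdges C hC).exists_isCycleSubgraph
  refine ⟨S.map f, ⟨fun H hH => ?_, fun e he => ?_⟩, S.card_map f⟩
  · obtain ⟨C, hC, rfl⟩ := Multiset.mem_map.1 hH
    exact hf C hC
  · rw [Multiset.countP_map, ← hS.countP_eq_two e he, Multiset.countP_eq_card_filter]
    exact congrArg _ (Multiset.filter_congr fun C hC => hmem C hC e)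

end Subgraphs

end CycleDoubleCover

/-- Every bridgeless planar graph on `n` vertices has a cycle double cover of size at most
`3⌊(n-1)/2⌋`. -/
theorem statement_4 {V : Type*} [Fintype V] (G : SimpleGraph V)
    (hplanar : IsPlanar G)
    (hbridgeless : ∀ e ∈ G.edgeSet, ¬ G.IsBridge e) :
    ∃ S : Multiset G.Subgraph, IsCDC G S ∧
      Multiset.card S ≤ 3 * ((Fintype.card V - 1) / 2) := by
  by_cases hne : G.support.Nonempty
  · obtain ⟨S, hS, hcard⟩ := CycleDoubleCover.exists_isCDCEdges_of_isPlanar hplanar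
      (CycleDoubleCover.bridgeless_of_forall_not_isBridge hbridgeless) hne
    obtain ⟨S', hS', hcard'⟩ := hS.exists_isCDC
    have hsupp : G.support.ncard ≤ Fintype.card V := by
      simpa using Set.ncard_le_ncard (Set.subset_univ G.support)
    exact ⟨S', hS', by lia⟩
  · refine ⟨0, ⟨by simp, fun e he => ?_⟩, by simp⟩
    induction e with
    | _ a b => exact absurd ⟨a, b, he⟩ hne
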